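/- arXiv:2602.00842 — 10 statements merged into one kernel-verified Lean document; each statement's English description precedes it below -/
import Mathlib

section
/- Let Y = {(x₁,…,x₆) ∈ SU(2)⁶ : Re(xᵢ) = 0 for all i, and x₁x₂x₃x₄x₅x₆ = 1}, and let χ(S²,6) denote the quotient of Y by simultaneous conjugation by SU(2), with the quotient topology. Let ν : χ(S²,6) → χ(S²,6) be the involution induced by (x₁,…,x₆) ↦ (−x₁,…,−x₆). Let X = {(R₋,S₋,R₊,S₊) ∈ SU(2)⁴ : R₋S₋R₋⁻¹S₋⁻¹R₊S₊R₊⁻¹S₊⁻¹ = 1} and let χ(F₂) be its quotient by simultaneous conjugation, with the quotient topology. Then the map p* sending the conjugacy class of (x₁,…,x₆) to the conjugacy class of (x₁x₂, x₃⁻¹x₂⁻¹, x₄x₅, x₆⁻¹x₅⁻¹) is a well-defined continuous surjection χ(S²,6) → χ(F₂) satisfying p*∘ν = p*, and the induced map on the quotient χ(S²,6)/ν → χ(F₂) is a homeomorphism. -/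
noncomputable section

/-- The condition defining the representation space of the genus two surface group:
quadruples `(R₋, S₋, R₊, S₊)` of unit quaternions satisfying `[R₋,S₋][R₊,S₊] = 1`. -/
def memX (t : Quaternion ℝ × Quaternion ℝ × Quaternion ℝ × Quaternion ℝ) : Prop :=
  ‖t.1‖ = 1 ∧ ‖t.2.1‖ = 1 ∧ ‖t.2.2.1‖ = 1 ∧ ‖t.2.2.2‖ = 1 ∧
    t.1 * t.2.1 * t.1⁻¹ * t.2.1⁻¹ * (t.2.2.1 * t.2.2.2 * t.2.2.1⁻¹ * t.2.2.2⁻¹) = 1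

abbrev GenusTwoRepSpace : Type := {t // memX t}

/-- Simultaneous conjugation relation on `X`. -/
def conjRel (s t : GenusTwoRepSpace) : Prop :=
  ∃ u : Quaternion ℝ, ‖u‖ = 1 ∧
    t.1.1 = u * s.1.1 * u⁻¹ ∧ t.1.2.1 = u * s.1.2.1 * u⁻¹ ∧
    t.1.2.2.1 = u * s.1.2.2.1 * u⁻¹ ∧ t.1.2.2.2 = u * s.1.2.2.2 * u⁻¹

/-- The `SU(2)` character variety `χ(F₂)` of the genus two surface. -/
abbrev ChiF2 : Type := Quot conjRel

/-- The condition defining the traceless representation space of the six punctured sphere: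
sixtuples of traceless unit quaternions whose product is `1`. -/
def memY (x : Fin 6 → Quaternion ℝ) : Prop :=
  (∀ i, ‖x i‖ = 1) ∧ (∀ i, (x i).re = 0) ∧ x 0 * x 1 * x 2 * x 3 * x 4 * x 5 = 1

abbrev SixPuncturedRepSpace : Type := {x // memY x}

/-- Simultaneous conjugation relation on `Y`. -/
def conjRelY (s t : SixPuncturedRepSpace) : Prop :=
  ∃ u : Quaternion ℝ, ‖u‖ = 1 ∧ ∀ i, t.1 i = u * s.1 i * u⁻¹

/-- The traceless `SU(2)` character variety `χ(S²,6)` of the six punctured sphere. -/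
abbrev ChiS26 : Type := Quot conjRelY

/-- The quadruple `(x₁x₂, x₃⁻¹x₂⁻¹, x₄x₅, x₆⁻¹x₅⁻¹)` associated to a sixtuple. -/
def pstarTuple (x : Fin 6 → Quaternion ℝ) :
    Quaternion ℝ × Quaternion ℝ × Quaternion ℝ × Quaternion ℝ :=
  (x 0 * x 1, (x 2)⁻¹ * (x 1)⁻¹, x 3 * x 4, (x 5)⁻¹ * (x 4)⁻¹)

/-!
The map `p*` comes from the hyperelliptic double cover of the sphere branched at six points. Put
`b = x₂` and `e = x₅`. A point of `Y` over `t = (R, S, R', S')` amounts to two square roots `b`, `e`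
of `-1` such that conjugation by `b` inverts `R` and `S`, conjugation by `e` inverts `R'` and `S'`,
and `RSb · R'S'e = 1`; note that `(RSb)² = -[R, S]`.

If `R` and `S` do not commute, then `b` is unique up to sign, because `b'b` is central. Both
`RSb` and `(R'S'e)⁻¹` are square roots of `-[R, S] ≠ -1`, hence agree up to sign, and the last
equation selects the sign of `e`.

If `R` and `S` commute, then so do `R'` and `S'`, and `g = RSb` ranges over the square roots of `-1`
which invert all four of `R, S, R', S'`. Such `g` are the unit imaginary quaternions orthogonal to
two axes, so they exist. Given two of them with `g' ≠ -g`, the nonzero quaternion `1 - g'g` commutes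
with `R, S, R', S'` and conjugates `g` to `g'`.

Hence the fibres of `p*` are exactly the orbits of `ν`, and compactness of `Y` makes `p*` a quotient
map.
-/

lemma ne_zero_of_norm_eq_one {E : Type*} [SeminormedAddGroup E] {x : E} (hx : ‖x‖ = 1) : x ≠ 0 :=
  ne_zero_of_norm_ne_zero (hx ▸ one_ne_zero)

section GroupWithZero

variable {G : Type*} [GroupWithZero G]

lemma semiconjBy_iff_eq_conj {u x y : G} (hu : u ≠ 0) : SemiconjBy u x y ↔ y = u * x * u⁻¹ := by
  rw [eq_mul_inv_iff_mul_eq₀ hu, SemiconjBy, eq_comm]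

lemma commutator_eq_one_iff_commute {R S : G} (hR : R ≠ 0) (hS : S ≠ 0) :
    R * S * R⁻¹ * S⁻¹ = 1 ↔ Commute R S := by
  rw [mul_inv_eq_one₀ hS, mul_inv_eq_iff_eq_mul₀ hR, Commute, SemiconjBy]

lemma commute_of_commutator_mul_commutator_eq_one {R S R' S' : G} (hR : R ≠ 0) (hS : S ≠ 0)
    (hR' : R' ≠ 0) (hS' : S' ≠ 0) (h : R * S * R⁻¹ * S⁻¹ * (R' * S' * R'⁻¹ * S'⁻¹) = 1)
    (hc : Commute R S) : Commute R' S' := by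
  rwa [(commutator_eq_one_iff_commute hR hS).2 hc, one_mul,
    commutator_eq_one_iff_commute hR' hS'] at h

end GroupWithZero

lemma semiconjBy_one_sub_mul {A : Type*} [Ring A] {g g' : A} (hg : g * g = -1)
    (hg' : g' * g' = -1) : SemiconjBy (1 - g' * g) g g' := by
  rw [SemiconjBy, sub_mul, mul_sub, mul_assoc, hg, ← mul_assoc g', hg']
  simp [add_comm]

section DivisionRing

variable {D : Type*} [DivisionRing D]

lemma inv_eq_neg_of_mul_self_eq_neg_one {b : D} (hb : b * b = -1) : b⁻¹ = -b :=
  inv_eq_of_mul_eq_one_right (by rw [mul_neg, hb, neg_neg])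

lemma semiconjBy_mul_inv_of_mul_self_eq_neg_one {a b : D} (ha : a * a = -1) (hb : b * b = -1) :
    SemiconjBy b (a * b) (a * b)⁻¹ := by
  rw [SemiconjBy, mul_inv_rev, inv_eq_neg_of_mul_self_eq_neg_one ha,
    inv_eq_neg_of_mul_self_eq_neg_one hb, neg_mul_neg, mul_assoc]

lemma mul_mul_self_eq_neg_one_of_semiconjBy_inv {b q : D} (hb : b * b = -1) (hq : q ≠ 0)
    (h : SemiconjBy b q q⁻¹) : q * b * (q * b) = -1 := by
  rw [mul_assoc, ← mul_assoc b, h.eq, mul_assoc, hb, mul_inv_cancel_left₀ hq]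

/-- `b` is a square root of `-1` whose conjugation action inverts `R` and `S`. Here `R` and `S` are
the holonomies along generators of the free fundamental group of a one-holed torus, and conjugation
by `b` realises its hyperelliptic involution. -/
structure IsHyperelliptic (b R S : D) : Prop where
  mul_self : b * b = -1
  left : SemiconjBy b R R⁻¹
  right : SemiconjBy b S S⁻¹

namespace IsHyperelliptic

variable {b b' c R S : D}

lemma of_mul_self_eq_neg_one {a : D} (ha : a * a = -1) (hb : b * b = -1) (hc : c * c = -1) :
    IsHyperelliptic b (a * b) (c * b) :=
  ⟨hb, semiconjBy_mul_inv_of_mul_self_eq_neg_one ha hb,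
    semiconjBy_mul_inv_of_mul_self_eq_neg_one hc hb⟩

lemma neg (h : IsHyperelliptic b R S) : IsHyperelliptic (-b) R S :=
  ⟨by rw [neg_mul_neg, h.mul_self], h.left.neg_left, h.right.neg_left⟩

lemma mul_mul_mul_self (h : IsHyperelliptic b R S) :
    R * S * b * (R * S * b) = -(R * S * R⁻¹ * S⁻¹) :=
  calc R * S * b * (R * S * b) = R * S * (b * R) * S * b := by simp only [mul_assoc]
    _ = R * S * R⁻¹ * (b * S) * b := by rw [h.left.eq]; simp only [mul_assoc]
    _ = R * S * R⁻¹ * S⁻¹ * (b * b) := by rw [h.right.eq]; simp only [mul_assoc]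
    _ = -(R * S * R⁻¹ * S⁻¹) := by rw [h.mul_self, mul_neg_one]

lemma mul_left_of_commute (h : IsHyperelliptic b R S) (hc : c ≠ 0) (hbc : SemiconjBy b c c⁻¹)
    (hR : Commute c R) (hS : Commute c S) : IsHyperelliptic (c * b) R S :=
  ⟨mul_mul_self_eq_neg_one_of_semiconjBy_inv h.mul_self hc hbc,
    SemiconjBy.mul_left hR.inv_right₀ h.left, SemiconjBy.mul_left hS.inv_right₀ h.right⟩

lemma semiconjBy_mul_of_commute (h : IsHyperelliptic b R S) (hc : Commute R S) :
    SemiconjBy b (R * S) (R * S)⁻¹ := by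
  rw [hc.mul_inv]
  exact h.left.mul_right h.right

lemma mul_mul_of_commute (h : IsHyperelliptic b R S) (hRS : R * S ≠ 0) (hc : Commute R S) :
    IsHyperelliptic (R * S * b) R S :=
  h.mul_left_of_commute hRS (h.semiconjBy_mul_of_commute hc)
    (.mul_left (.refl R) hc.symm) (.mul_left hc (.refl S))

lemma inv_mul_of_commute (h : IsHyperelliptic b R S) (hRS : R * S ≠ 0) (hc : Commute R S) :
    IsHyperelliptic ((R * S)⁻¹ * b) R S :=
  h.mul_left_of_commute (inv_ne_zero hRS) (h.semiconjBy_mul_of_commute hc).inv_right₀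
    (Commute.mul_left (.refl R) hc.symm).inv_left₀ (Commute.mul_left hc (.refl S)).inv_left₀

lemma commute_mul_left (h : IsHyperelliptic b R S) (h' : IsHyperelliptic b' R S) :
    Commute (b' * b) R := by
  simpa only [inv_inv, Commute] using h'.left.inv_right₀.mul_left h.left

lemma commute_mul_right (h : IsHyperelliptic b R S) (h' : IsHyperelliptic b' R S) :
    Commute (b' * b) S := by
  simpa only [inv_inv, Commute] using h'.right.inv_right₀.mul_left h.right

end IsHyperelliptic

/-- The pairs `(b, e) = (x₂, x₅)` which parametrise the fibre of `p*` over `t = (R, S, R', S')`: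
hyperelliptic elements for the two one-holed tori, glued along the boundary. -/
structure IsHyperellipticPair (t : D × D × D × D) (b e : D) : Prop where
  left : IsHyperelliptic b t.1 t.2.1
  right : IsHyperelliptic e t.2.2.1 t.2.2.2
  mul_eq_one : t.1 * t.2.1 * b * (t.2.2.1 * t.2.2.2 * e) = 1

/-- The sixtuple over `t = (R, S, R', S')` with second entry `b` and fifth entry `e`; the other
entries are forced by `x₁x₂ = R`, `x₃⁻¹x₂⁻¹ = S`, `x₄x₅ = R'`, `x₆⁻¹x₅⁻¹ = S'` when all `xᵢ² = -1`.
-/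
def hyperellipticLift (t : D × D × D × D) (b e : D) : Fin 6 → D :=
  ![-(t.1 * b), b, -(t.2.1 * b), -(t.2.2.1 * e), e, -(t.2.2.2 * e)]

lemma hyperellipticLift_neg (t : D × D × D × D) (b e : D) :
    hyperellipticLift t (-b) (-e) = -hyperellipticLift t b e := by
  simp only [hyperellipticLift, mul_neg, Matrix.neg_cons, Matrix.neg_empty]

/-- `u` commutes with all four entries of `t`, that is, `u` stabilises `t` under simultaneous
conjugation. -/
def CentralizesTuple (u : D) (t : D × D × D × D) : Prop :=
  Commute u t.1 ∧ Commute u t.2.1 ∧ Commute u t.2.2.1 ∧ Commute u t.2.2.2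

lemma CentralizesTuple.semiconjBy_hyperellipticLift {u b b' e e' : D} {t : D × D × D × D}
    (hu : CentralizesTuple u t) (hb : SemiconjBy u b b') (he : SemiconjBy u e e') (i : Fin 6) :
    SemiconjBy u (hyperellipticLift t b e i) (hyperellipticLift t b' e' i) := by
  obtain ⟨hR, hS, hR', hS'⟩ := hu
  fin_cases i
  exacts [(SemiconjBy.mul_right hR hb).neg_right, hb, (SemiconjBy.mul_right hS hb).neg_right,
    (SemiconjBy.mul_right hR' he).neg_right, he, (SemiconjBy.mul_right hS' he).neg_right]

namespace IsHyperellipticPair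

variable {t : D × D × D × D} {b b' e e' : D}

lemma left_ne_zero (h : IsHyperellipticPair t b e) : t.1 * t.2.1 ≠ 0 :=
  left_ne_zero_of_mul (left_ne_zero_of_mul (h.mul_eq_one ▸ one_ne_zero))

lemma right_ne_zero (h : IsHyperellipticPair t b e) : t.2.2.1 * t.2.2.2 ≠ 0 :=
  left_ne_zero_of_mul (right_ne_zero_of_mul (h.mul_eq_one ▸ one_ne_zero))

lemma eq_inv_mul_inv (h : IsHyperellipticPair t b e) :
    e = (t.2.2.1 * t.2.2.2)⁻¹ * (t.1 * t.2.1 * b)⁻¹ := by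
  rw [← eq_inv_of_mul_eq_one_right h.mul_eq_one, inv_mul_cancel_left₀ h.right_ne_zero]

lemma commutator_mul_commutator (h : IsHyperellipticPair t b e) :
    t.1 * t.2.1 * t.1⁻¹ * t.2.1⁻¹ * (t.2.2.1 * t.2.2.2 * t.2.2.1⁻¹ * t.2.2.2⁻¹) = 1 := by
  rw [← neg_mul_neg, ← h.left.mul_mul_mul_self, ← h.right.mul_mul_mul_self, mul_assoc,
    ← mul_assoc _ _ (t.2.2.1 * t.2.2.2 * e), h.mul_eq_one, one_mul, h.mul_eq_one]

lemma commute_right_of_commute_left (h : IsHyperellipticPair t b e) (hc : Commute t.1 t.2.1) :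
    Commute t.2.2.1 t.2.2.2 :=
  commute_of_commutator_mul_commutator_eq_one (left_ne_zero_of_mul h.left_ne_zero)
    (right_ne_zero_of_mul h.left_ne_zero) (left_ne_zero_of_mul h.right_ne_zero)
    (right_ne_zero_of_mul h.right_ne_zero) h.commutator_mul_commutator hc

lemma isHyperelliptic_mul_mul_left (h : IsHyperellipticPair t b e) (hc : Commute t.1 t.2.1) :
    IsHyperelliptic (t.1 * t.2.1 * b) t.1 t.2.1 :=
  h.left.mul_mul_of_commute h.left_ne_zero hc

lemma isHyperelliptic_mul_mul_right (h : IsHyperellipticPair t b e) (hc : Commute t.1 t.2.1) :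
    IsHyperelliptic (t.1 * t.2.1 * b) t.2.2.1 t.2.2.2 := by
  have hg := (h.isHyperelliptic_mul_mul_left hc).mul_self
  have hk : -(t.2.2.1 * t.2.2.2 * e) = t.1 * t.2.1 * b := by
    rw [eq_inv_of_mul_eq_one_right h.mul_eq_one, inv_eq_neg_of_mul_self_eq_neg_one hg, neg_neg]
  exact hk ▸
    (h.right.mul_mul_of_commute h.right_ne_zero (h.commute_right_of_commute_left hc)).neg

lemma of_commute {g : D} (hleft : IsHyperelliptic g t.1 t.2.1)
    (hright : IsHyperelliptic g t.2.2.1 t.2.2.2) (ht : t.1 * t.2.1 ≠ 0)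
    (ht' : t.2.2.1 * t.2.2.2 ≠ 0) (hc : Commute t.1 t.2.1) (hc' : Commute t.2.2.1 t.2.2.2) :
    IsHyperellipticPair t ((t.1 * t.2.1)⁻¹ * g) (-((t.2.2.1 * t.2.2.2)⁻¹ * g)) := by
  refine ⟨hleft.inv_mul_of_commute ht hc, (hright.inv_mul_of_commute ht' hc').neg, ?_⟩
  rw [mul_neg, mul_inv_cancel_left₀ ht, mul_inv_cancel_left₀ ht', mul_neg, hleft.mul_self, neg_neg]

lemma eq_neg_right_of_eq_neg_left (h : IsHyperellipticPair t b e)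
    (h' : IsHyperellipticPair t b' e') (hb : b' = -b) : e' = -e := by
  rw [h.eq_inv_mul_inv, h'.eq_inv_mul_inv, hb, mul_neg, inv_neg, mul_neg]

lemma semiconjBy_right_of_semiconjBy_left {u : D} (h : IsHyperellipticPair t b e)
    (h' : IsHyperellipticPair t b' e') (hu : CentralizesTuple u t) (hb : SemiconjBy u b b') :
    SemiconjBy u e e' := by
  obtain ⟨hR, hS, hR', hS'⟩ := hu
  rw [h.eq_inv_mul_inv, h'.eq_inv_mul_inv]
  exact SemiconjBy.mul_right (Commute.mul_right hR' hS').inv_right₀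
    (SemiconjBy.mul_right (Commute.mul_right hR hS) hb).inv_right₀

lemma eq_neg_or_exists_semiconjBy_of_commute (h : IsHyperellipticPair t b e)
    (h' : IsHyperellipticPair t b' e') (hc : Commute t.1 t.2.1) :
    b' = -b ∨ ∃ u ≠ 0, CentralizesTuple u t ∧ SemiconjBy u b b' := by
  have hleft := h.isHyperelliptic_mul_mul_left hc
  have hleft' := h'.isHyperelliptic_mul_mul_left hc
  have hright := h.isHyperelliptic_mul_mul_right hc
  have hright' := h'.isHyperelliptic_mul_mul_right hc
  set c := t.1 * t.2.1
  have hc₀ : c ≠ 0 := h.left_ne_zero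
  by_cases hu : 1 - c * b' * (c * b) = 0
  · left
    have hinv : c * b' = -(c * b) := by
      rw [eq_inv_of_mul_eq_one_left (sub_eq_zero.1 hu).symm,
        inv_eq_neg_of_mul_self_eq_neg_one hleft.mul_self]
    exact mul_left_cancel₀ hc₀ (by rw [hinv, mul_neg])
  · right
    have hcentral : CentralizesTuple (1 - c * b' * (c * b)) t :=
      ⟨.sub_left (.one_left _) (hleft.commute_mul_left hleft'),
        .sub_left (.one_left _) (hleft.commute_mul_right hleft'),
        .sub_left (.one_left _) (hright.commute_mul_left hright'),
        .sub_left (.one_left _) (hright.commute_mul_right hright')⟩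
    refine ⟨_, hu, hcentral, ?_⟩
    have hcomm : Commute (1 - c * b' * (c * b)) c := .mul_right hcentral.1 hcentral.2.1
    simpa only [inv_mul_cancel_left₀ hc₀] using
      SemiconjBy.mul_right hcomm.inv_right₀
        (semiconjBy_one_sub_mul hleft.mul_self hleft'.mul_self)

lemma hyperellipticLift_mul_self (h : IsHyperellipticPair t b e) (i : Fin 6) :
    hyperellipticLift t b e i * hyperellipticLift t b e i = -1 := by
  have hleft {q : D} (hq : q ≠ 0) (hqb : SemiconjBy b q q⁻¹) : -(q * b) * -(q * b) = -1 := by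
    rw [neg_mul_neg, mul_mul_self_eq_neg_one_of_semiconjBy_inv h.left.mul_self hq hqb]
  have hright {q : D} (hq : q ≠ 0) (hqe : SemiconjBy e q q⁻¹) : -(q * e) * -(q * e) = -1 := by
    rw [neg_mul_neg, mul_mul_self_eq_neg_one_of_semiconjBy_inv h.right.mul_self hq hqe]
  fin_cases i
  exacts [hleft (left_ne_zero_of_mul h.left_ne_zero) h.left.left, h.left.mul_self,
    hleft (right_ne_zero_of_mul h.left_ne_zero) h.left.right,
    hright (left_ne_zero_of_mul h.right_ne_zero) h.right.left, h.right.mul_self,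
    hright (right_ne_zero_of_mul h.right_ne_zero) h.right.right]

end IsHyperellipticPair

end DivisionRing

section Quaternion

open scoped Quaternion

section OrderedField

variable {K : Type*} [Field K] [LinearOrder K] [IsStrictOrderedRing K]

lemma exists_im_eq_smul_im_of_commute {p q : ℍ[K]} (h : Commute p q) (hp : p.im ≠ 0) :
    ∃ r : K, q.im = r • p.im := by
  have him : Commute p.im q.im := by
    rw [← Quaternion.sub_re_self p, ← Quaternion.sub_re_self q]
    exact ((h.sub_left (Quaternion.coe_commute _ _)).sub_right
      ((Quaternion.coe_commute _ _).symm.sub_left (Quaternion.coe_commute _ _)))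
  -- The product of two commuting imaginary quaternions is self-adjoint, hence real.
  have hreal : p.im * q.im = ((p.im * q.im).re : ℍ[K]) := by
    rw [← Quaternion.star_eq_self, star_mul, Quaternion.star_im, Quaternion.star_im, neg_mul_neg,
      him.eq]
  refine ⟨-((p.im * q.im).re * (Quaternion.normSq p.im)⁻¹), ?_⟩
  calc q.im = (p.im)⁻¹ * (p.im * q.im) := (inv_mul_cancel_left₀ hp _).symm
    _ = _ := by
      rw [hreal, Quaternion.mul_coe_eq_smul, Quaternion.inv_def, Quaternion.star_im, smul_smul,
        smul_neg, neg_smul, Quaternion.re_coe]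

lemma commute_of_commute_of_im_ne_zero {p q r : ℍ[K]} (hq : Commute p q) (hr : Commute p r)
    (hp : p.im ≠ 0) : Commute q r := by
  obtain ⟨a, ha⟩ := exists_im_eq_smul_im_of_commute hq hp
  rw [← Quaternion.re_add_im q, ha]
  have hpim : Commute p.im r := by
    rw [← Quaternion.sub_re_self p]
    exact hr.sub_left (Quaternion.coe_commute _ _)
  exact (Quaternion.coe_commute _ _).add_left (hpim.smul_left a)

lemma IsHyperelliptic.eq_or_eq_neg_of_not_commute {b b' R S : ℍ[K]} (h : IsHyperelliptic b R S)
    (h' : IsHyperelliptic b' R S) (hc : ¬Commute R S) : b' = b ∨ b' = -b := by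
  have him : (b' * b).im = 0 := by
    by_contra hne
    exact hc (commute_of_commute_of_im_ne_zero (h.commute_mul_left h') (h.commute_mul_right h') hne)
  have hreal : b' * b = ((b' * b).re : ℍ[K]) := by
    rw [← Quaternion.sub_re_self, sub_eq_zero] at him
    exact him
  have hb' : b' = -((b' * b).re : ℍ[K]) * b := by
    rw [← hreal, neg_mul, mul_assoc, h.mul_self, mul_neg_one, neg_neg]
  have hcomm : Commute b' b := by
    rw [hb']
    exact (Quaternion.coe_commute (b' * b).re b).neg_left.mul_left (.refl b)
  exact hcomm.mul_self_eq_mul_self_iff.1 (h'.mul_self.trans h.mul_self.symm)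

lemma IsHyperellipticPair.eq_neg_or_exists_semiconjBy {t : ℍ[K] × ℍ[K] × ℍ[K] × ℍ[K]}
    {b b' e e' : ℍ[K]} (h : IsHyperellipticPair t b e) (h' : IsHyperellipticPair t b' e') :
    b' = -b ∨ ∃ u ≠ 0, CentralizesTuple u t ∧ SemiconjBy u b b' := by
  by_cases hc : Commute t.1 t.2.1
  · exact h.eq_neg_or_exists_semiconjBy_of_commute h' hc
  · refine (h.left.eq_or_eq_neg_of_not_commute h'.left hc).symm.imp_right fun hb => ?_
    exact ⟨1, one_ne_zero, ⟨.one_left _, .one_left _, .one_left _, .one_left _⟩,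
      hb ▸ SemiconjBy.one_left b⟩

lemma re_mul_eq_re_im_mul {q v : ℍ[K]} (hv : v.re = 0) : (q * v).re = (q.im * v).re := by
  simp [Quaternion.re_mul, hv]

lemma exists_axis_of_commute {R S : ℍ[K]} (h : Commute R S) :
    ∃ p : ℍ[K], ∀ v : ℍ[K], v.re = 0 → (p * v).re = 0 → (R * v).re = 0 ∧ (S * v).re = 0 := by
  by_cases hR : R.im = 0
  · refine ⟨S, fun v hv hSv => ⟨?_, hSv⟩⟩
    rw [re_mul_eq_re_im_mul hv, hR, zero_mul, Quaternion.re_zero]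
  · obtain ⟨r, hr⟩ := exists_im_eq_smul_im_of_commute h hR
    refine ⟨R, fun v hv hRv => ⟨hRv, ?_⟩⟩
    rw [re_mul_eq_re_im_mul hv, hr, smul_mul_assoc, Quaternion.re_smul, ← re_mul_eq_re_im_mul hv,
      hRv, smul_zero]

lemma commute_of_commute_mul_self {g k : ℍ[K]} (hg : g.re ≠ 0) (h : Commute (g * g) k) :
    Commute g k := by
  have hquad : g * g = ((2 * g.re : K) : ℍ[K]) * g - Quaternion.normSq g := by
    rw [← Quaternion.self_add_star', ← Quaternion.star_mul_self, add_mul, add_sub_cancel_right]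
  have hlin : Commute (((2 * g.re : K) : ℍ[K]) * g) k := by
    rw [← sub_add_cancel (_ * g) ((Quaternion.normSq g : K) : ℍ[K]), ← hquad]
    exact h.add_left (Quaternion.coe_commute _ _)
  rwa [Quaternion.coe_mul_eq_smul, Commute.smul_left_iff₀ (mul_ne_zero two_ne_zero hg)] at hlin

lemma eq_or_eq_neg_of_mul_self_eq_mul_self {g k : ℍ[K]} (hg : g.re ≠ 0) (h : g * g = k * k) :
    g = k ∨ g = -k := by
  have hcomm : Commute g k := commute_of_commute_mul_self hg (h ▸ .mul_left (.refl k) (.refl k))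
  exact hcomm.mul_self_eq_mul_self_iff.1 h

end OrderedField

lemma mul_self_eq_neg_one_iff_norm_eq_one_and_re_eq_zero {x : ℍ[ℝ]} :
    x * x = -1 ↔ ‖x‖ = 1 ∧ x.re = 0 := by
  have hsq : ‖x‖ = 1 → (x * x = -1 ↔ x.re = 0) := fun hx => by
    rw [← Quaternion.sq_eq_neg_normSq, Quaternion.normSq_eq_norm_mul_self, hx, mul_one,
      Quaternion.coe_one, sq]
  refine ⟨fun h => ?_, fun h => (hsq h.1).2 h.2⟩
  have hx : ‖x‖ = 1 := by
    have hmul : ‖x‖ * ‖x‖ = 1 := by rw [← norm_mul, h, norm_neg, norm_one]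
    exact (mul_self_eq_one_iff.1 hmul).resolve_right (by linarith [norm_nonneg x])
  exact ⟨hx, (hsq hx).1 h⟩

lemma semiconjBy_inv_of_re_mul_eq_zero {q v : ℍ[ℝ]} (hq : ‖q‖ = 1) (hv : v.re = 0)
    (h : (q * v).re = 0) : SemiconjBy v q q⁻¹ := by
  have hinv : q⁻¹ = star q := by
    rw [Quaternion.inv_def, Quaternion.normSq_eq_norm_mul_self, hq, mul_one, inv_one, one_smul]
  have hstar : v * star q = q * v := by
    rw [← Quaternion.star_eq_neg] at hv h
    rw [← neg_inj, ← h, star_mul, hv, neg_mul]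
  rw [← SemiconjBy.inv_right_iff₀, inv_inv, hinv]
  exact hstar

lemma exists_norm_eq_one_forall_re_mul_eq_zero {ι : Type*} [Fintype ι] (hι : Fintype.card ι < 4)
    (c : ι → ℍ[ℝ]) : ∃ v : ℍ[ℝ], ‖v‖ = 1 ∧ ∀ i, (c i * v).re = 0 := by
  let f : ℍ[ℝ] →ₗ[ℝ] ι → ℝ :=
    LinearMap.pi fun i => QuaternionAlgebra.reₗ _ _ _ ∘ₗ LinearMap.mulLeft ℝ (c i)
  have hker : LinearMap.ker f ≠ ⊥ := LinearMap.ker_ne_bot_of_finrank_lt <| by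
    rwa [Module.finrank_fintype_fun_eq_card, Quaternion.finrank_eq_four]
  obtain ⟨w, hw, hw₀⟩ := Submodule.exists_mem_ne_zero_of_ne_bot hker
  refine ⟨‖w‖⁻¹ • w, norm_smul_inv_norm (𝕜 := ℝ) hw₀, fun i => ?_⟩
  have hwi : (c i * w).re = 0 := congrFun (LinearMap.mem_ker.1 hw) i
  rw [mul_smul_comm, Quaternion.re_smul, hwi, smul_zero]

lemma exists_mul_self_eq_neg_one_and_re_mul_eq_zero (p q : ℍ[ℝ]) :
    ∃ v : ℍ[ℝ], v * v = -1 ∧ (p * v).re = 0 ∧ (q * v).re = 0 := by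
  obtain ⟨v, hv, h⟩ := exists_norm_eq_one_forall_re_mul_eq_zero (by simp) ![1, p, q]
  have hre : v.re = 0 := by simpa using h 0
  exact ⟨v, mul_self_eq_neg_one_iff_norm_eq_one_and_re_eq_zero.2 ⟨hv, hre⟩, h 1, h 2⟩

lemma isHyperelliptic_of_re_mul_eq_zero {R S v : ℍ[ℝ]} (hR : ‖R‖ = 1) (hS : ‖S‖ = 1)
    (hv : v * v = -1) (hRv : (R * v).re = 0) (hSv : (S * v).re = 0) : IsHyperelliptic v R S :=
  have hre := (mul_self_eq_neg_one_iff_norm_eq_one_and_re_eq_zero.1 hv).2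
  ⟨hv, semiconjBy_inv_of_re_mul_eq_zero hR hre hRv, semiconjBy_inv_of_re_mul_eq_zero hS hre hSv⟩

lemma exists_isHyperelliptic {R S : ℍ[ℝ]} (hR : ‖R‖ = 1) (hS : ‖S‖ = 1) :
    ∃ b, IsHyperelliptic b R S := by
  obtain ⟨b, hb, hRb, hSb⟩ := exists_mul_self_eq_neg_one_and_re_mul_eq_zero R S
  exact ⟨b, isHyperelliptic_of_re_mul_eq_zero hR hS hb hRb hSb⟩

lemma exists_isHyperellipticPair_of_commute {t : ℍ[ℝ] × ℍ[ℝ] × ℍ[ℝ] × ℍ[ℝ]} (ht : memX t)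
    (hc : Commute t.1 t.2.1) : ∃ b e, IsHyperellipticPair t b e := by
  obtain ⟨hR, hS, hR', hS', hrel⟩ := ht
  have hR₀ := ne_zero_of_norm_eq_one hR
  have hS₀ := ne_zero_of_norm_eq_one hS
  have hR₀' := ne_zero_of_norm_eq_one hR'
  have hS₀' := ne_zero_of_norm_eq_one hS'
  have hc' := commute_of_commutator_mul_commutator_eq_one hR₀ hS₀ hR₀' hS₀' hrel hc
  obtain ⟨p, hp⟩ := exists_axis_of_commute hc
  obtain ⟨q, hq⟩ := exists_axis_of_commute hc'
  obtain ⟨g, hg, hpg, hqg⟩ := exists_mul_self_eq_neg_one_and_re_mul_eq_zero p q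
  have hre := (mul_self_eq_neg_one_iff_norm_eq_one_and_re_eq_zero.1 hg).2
  obtain ⟨hRg, hSg⟩ := hp g hre hpg
  obtain ⟨hRg', hSg'⟩ := hq g hre hqg
  exact ⟨_, _, .of_commute (isHyperelliptic_of_re_mul_eq_zero hR hS hg hRg hSg)
    (isHyperelliptic_of_re_mul_eq_zero hR' hS' hg hRg' hSg') (mul_ne_zero hR₀ hS₀)
    (mul_ne_zero hR₀' hS₀') hc hc'⟩

lemma exists_isHyperellipticPair_of_not_commute {t : ℍ[ℝ] × ℍ[ℝ] × ℍ[ℝ] × ℍ[ℝ]} (ht : memX t)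
    (hc : ¬Commute t.1 t.2.1) : ∃ b e, IsHyperellipticPair t b e := by
  obtain ⟨hR, hS, hR', hS', hrel⟩ := ht
  obtain ⟨b, hb⟩ := exists_isHyperelliptic hR hS
  obtain ⟨e, he⟩ := exists_isHyperelliptic hR' hS'
  set g := t.1 * t.2.1 * b with hg_def
  set k := t.2.2.1 * t.2.2.2 * e with hk_def
  have hnorm {x : ℍ[ℝ]} (hx : x * x = -1) : ‖x‖ = 1 :=
    (mul_self_eq_neg_one_iff_norm_eq_one_and_re_eq_zero.1 hx).1
  have hg : ‖g‖ = 1 := by simp only [hg_def, norm_mul, hR, hS, hnorm hb.mul_self, mul_one]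
  have hk : k ≠ 0 := ne_zero_of_norm_eq_one <| by
    simp only [hk_def, norm_mul, hR', hS', hnorm he.mul_self, mul_one]
  have hre : g.re ≠ 0 := fun h => hc <| by
    have hgg := mul_self_eq_neg_one_iff_norm_eq_one_and_re_eq_zero.2 ⟨hg, h⟩
    rwa [hb.mul_mul_mul_self, neg_inj, commutator_eq_one_iff_commute (ne_zero_of_norm_eq_one hR)
      (ne_zero_of_norm_eq_one hS)] at hgg
  have hsq : g * g = k⁻¹ * k⁻¹ := by
    rw [← mul_inv_rev]
    apply eq_inv_of_mul_eq_one_left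
    rw [hb.mul_mul_mul_self, he.mul_mul_mul_self, neg_mul_neg, hrel]
  rcases eq_or_eq_neg_of_mul_self_eq_mul_self hre hsq with h | h
  · refine ⟨b, e, hb, he, ?_⟩
    rw [← hg_def, h, inv_mul_cancel₀ hk]
  · refine ⟨b, -e, hb, he.neg, ?_⟩
    rw [mul_neg, ← hg_def, h, neg_mul_neg, inv_mul_cancel₀ hk]

lemma exists_isHyperellipticPair {t : ℍ[ℝ] × ℍ[ℝ] × ℍ[ℝ] × ℍ[ℝ]} (ht : memX t) :
    ∃ b e, IsHyperellipticPair t b e :=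
  (em (Commute t.1 t.2.1)).elim (exists_isHyperellipticPair_of_commute ht)
    (exists_isHyperellipticPair_of_not_commute ht)

end Quaternion

section RepSpace

open scoped Quaternion

lemma memY_iff {x : Fin 6 → ℍ[ℝ]} :
    memY x ↔ (∀ i, x i * x i = -1) ∧ x 0 * x 1 * x 2 * x 3 * x 4 * x 5 = 1 := by
  simp only [memY, mul_self_eq_neg_one_iff_norm_eq_one_and_re_eq_zero, forall_and, and_assoc]

lemma pstarTuple_eq_of_mul_self {x : Fin 6 → ℍ[ℝ]} (hx : ∀ i, x i * x i = -1) :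
    pstarTuple x = (x 0 * x 1, x 2 * x 1, x 3 * x 4, x 5 * x 4) := by
  simp only [pstarTuple, inv_eq_neg_of_mul_self_eq_neg_one (hx _), neg_mul_neg]

lemma pstarTuple_neg (x : Fin 6 → ℍ[ℝ]) : pstarTuple (fun i => -(x i)) = pstarTuple x := by
  simp only [pstarTuple, inv_neg, neg_mul_neg]

lemma pstarTuple_conj (x : Fin 6 → ℍ[ℝ]) {u : ℍ[ℝ]} (hu : u ≠ 0) :
    pstarTuple (fun i => u * x i * u⁻¹) =
      (u * (pstarTuple x).1 * u⁻¹, u * (pstarTuple x).2.1 * u⁻¹,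
        u * (pstarTuple x).2.2.1 * u⁻¹, u * (pstarTuple x).2.2.2 * u⁻¹) := by
  simp only [pstarTuple, mul_inv_rev, inv_inv, mul_assoc, inv_mul_cancel_left₀ hu]

namespace memY

variable {x y : Fin 6 → ℍ[ℝ]}

lemma neg (hx : memY x) : memY (fun i => -(x i)) := by
  obtain ⟨hsq, hprod⟩ := memY_iff.1 hx
  exact memY_iff.2 ⟨fun i => by rw [neg_mul_neg, hsq i], by simpa using hprod⟩

lemma conj (hx : memY x) {u : ℍ[ℝ]} (hu : u ≠ 0) : memY (fun i => u * x i * u⁻¹) := by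
  obtain ⟨hsq, hprod⟩ := memY_iff.1 hx
  refine memY_iff.2 ⟨fun i => ?_, ?_⟩
  · calc u * x i * u⁻¹ * (u * x i * u⁻¹) = u * (x i * x i) * u⁻¹ := by
          simp only [mul_assoc, inv_mul_cancel_left₀ hu]
      _ = -1 := by rw [hsq, mul_neg_one, neg_mul, mul_inv_cancel₀ hu]
  · calc _ = u * (x 0 * x 1 * x 2 * x 3 * x 4 * x 5) * u⁻¹ := by
          simp only [mul_assoc, inv_mul_cancel_left₀ hu]
      _ = 1 := by rw [hprod, mul_one, mul_inv_cancel₀ hu]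

lemma isHyperellipticPair (hx : memY x) : IsHyperellipticPair (pstarTuple x) (x 1) (x 4) := by
  obtain ⟨hsq, hprod⟩ := memY_iff.1 hx
  rw [pstarTuple_eq_of_mul_self hsq]
  refine ⟨.of_mul_self_eq_neg_one (hsq 0) (hsq 1) (hsq 2),
    .of_mul_self_eq_neg_one (hsq 3) (hsq 4) (hsq 5), ?_⟩
  calc x 0 * x 1 * (x 2 * x 1) * x 1 * (x 3 * x 4 * (x 5 * x 4) * x 4)
      = x 0 * x 1 * x 2 * (x 1 * x 1) * x 3 * x 4 * x 5 * (x 4 * x 4) := by simp only [mul_assoc]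
    _ = x 0 * x 1 * x 2 * x 3 * x 4 * x 5 := by
      simp only [hsq, mul_neg, mul_one, neg_mul, neg_neg]
    _ = 1 := hprod

lemma eq_hyperellipticLift (hx : memY x) :
    x = hyperellipticLift (pstarTuple x) (x 1) (x 4) := by
  have hsq := (memY_iff.1 hx).1
  have hcancel (i j : Fin 6) : x i = -(x i * x j * x j) := by
    rw [mul_assoc, hsq, mul_neg_one, neg_neg]
  rw [pstarTuple_eq_of_mul_self hsq]
  funext i
  fin_cases i
  exacts [hcancel 0 1, rfl, hcancel 2 1, hcancel 3 4, rfl, hcancel 5 4]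

lemma memX_pstarTuple (hx : memY x) : memX (pstarTuple x) := by
  refine ⟨?_, ?_, ?_, ?_, hx.isHyperellipticPair.commutator_mul_commutator⟩ <;>
    simp only [pstarTuple, norm_mul, norm_inv, hx.1, inv_one, mul_one]

lemma eq_neg_or_exists_semiconjBy (hx : memY x) (hy : memY y)
    (hxy : pstarTuple x = pstarTuple y) :
    y = -x ∨ ∃ u ≠ 0, ∀ i, SemiconjBy u (x i) (y i) := by
  have h := hx.isHyperellipticPair
  have h' := hxy ▸ hy.isHyperellipticPair
  rw [hx.eq_hyperellipticLift, hy.eq_hyperellipticLift, ← hxy]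
  refine (h.eq_neg_or_exists_semiconjBy h').imp (fun hb => ?_) ?_
  · rw [hb, h.eq_neg_right_of_eq_neg_left h' hb, hyperellipticLift_neg]
  · rintro ⟨u, hu, hut, hb⟩
    exact ⟨u, hu, hut.semiconjBy_hyperellipticLift hb
      (h.semiconjBy_right_of_semiconjBy_left h' hut hb)⟩

end memY

namespace IsHyperellipticPair

variable {t : ℍ[ℝ] × ℍ[ℝ] × ℍ[ℝ] × ℍ[ℝ]} {b e : ℍ[ℝ]}

lemma memY_hyperellipticLift (h : IsHyperellipticPair t b e) : memY (hyperellipticLift t b e) := by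
  refine memY_iff.2 ⟨h.hyperellipticLift_mul_self, ?_⟩
  calc -(t.1 * b) * b * -(t.2.1 * b) * -(t.2.2.1 * e) * e * -(t.2.2.2 * e)
      = t.1 * (b * b) * t.2.1 * b * t.2.2.1 * (e * e) * t.2.2.2 * e := by
        simp only [mul_assoc, neg_mul, mul_neg, neg_neg]
    _ = t.1 * t.2.1 * b * (t.2.2.1 * t.2.2.2 * e) := by
        rw [h.left.mul_self, h.right.mul_self]
        simp only [mul_assoc, neg_mul, mul_neg, neg_neg, one_mul]
    _ = 1 := h.mul_eq_one

lemma pstarTuple_hyperellipticLift (h : IsHyperellipticPair t b e) :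
    pstarTuple (hyperellipticLift t b e) = t := by
  have hleft (q : ℍ[ℝ]) : -(q * b) * b = q := by
    rw [neg_mul, mul_assoc, h.left.mul_self, mul_neg_one, neg_neg]
  have hright (q : ℍ[ℝ]) : -(q * e) * e = q := by
    rw [neg_mul, mul_assoc, h.right.mul_self, mul_neg_one, neg_neg]
  rw [pstarTuple_eq_of_mul_self h.hyperellipticLift_mul_self]
  exact Prod.ext (hleft _) (Prod.ext (hleft _) (Prod.ext (hright _) (hright _)))

end IsHyperellipticPair

/-- The lift `Y → X` of `p*` to representation spaces. -/
def pstarRep (x : SixPuncturedRepSpace) : GenusTwoRepSpace :=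
  ⟨pstarTuple x.1, x.2.memX_pstarTuple⟩

lemma pstarRep_surjective : Function.Surjective pstarRep := by
  rintro ⟨t, ht⟩
  obtain ⟨b, e, h⟩ := exists_isHyperellipticPair ht
  exact ⟨⟨_, h.memY_hyperellipticLift⟩, Subtype.ext h.pstarTuple_hyperellipticLift⟩

lemma continuous_pstarRep : Continuous pstarRep := by
  have hcoord (i : Fin 6) : Continuous fun x : SixPuncturedRepSpace => x.1 i :=
    (continuous_apply i).comp continuous_subtype_val
  have hinv (i : Fin 6) : Continuous fun x : SixPuncturedRepSpace => (x.1 i)⁻¹ :=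
    (hcoord i).inv₀ fun x => ne_zero_of_norm_eq_one (x.2.1 i)
  exact (((hcoord 0).mul (hcoord 1)).prodMk (((hinv 2).mul (hinv 1)).prodMk
    (((hcoord 3).mul (hcoord 4)).prodMk ((hinv 5).mul (hinv 4))))).subtype_mk _

instance compactSpace_sixPuncturedRepSpace : CompactSpace SixPuncturedRepSpace := by
  refine isCompact_iff_compactSpace.1 (?_ : IsCompact {x | memY x})
  have hsphere : IsCompact (Set.univ.pi fun _ : Fin 6 => Metric.sphere (0 : ℍ[ℝ]) 1) :=
    isCompact_univ_pi fun _ => isCompact_sphere _ _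
  refine hsphere.of_isClosed_subset ?_ fun x hx i _ => mem_sphere_zero_iff_norm.2 (hx.1 i)
  simp only [memY_iff, Set.ofPred_and, Set.ofPred_forall]
  exact (isClosed_iInter fun i => isClosed_eq (by fun_prop) continuous_const).inter
    (isClosed_eq (by fun_prop) continuous_const)

lemma isQuotientMap_pstarRep : Topology.IsQuotientMap pstarRep :=
  continuous_pstarRep.isClosedMap.isQuotientMap continuous_pstarRep pstarRep_surjective

end RepSpace

section CharacterVariety

lemma conjRelY_iff_exists_semiconjBy {x y : SixPuncturedRepSpace} :
    conjRelY x y ↔ ∃ u ≠ 0, ∀ i, SemiconjBy u (x.1 i) (y.1 i) := by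
  constructor
  · rintro ⟨u, hu, h⟩
    have hu₀ := ne_zero_of_norm_eq_one hu
    exact ⟨u, hu₀, fun i => (semiconjBy_iff_eq_conj hu₀).2 (h i)⟩
  · rintro ⟨u, hu, h⟩
    have hnorm : ‖‖u‖⁻¹ • u‖ = 1 := norm_smul_inv_norm (𝕜 := ℝ) hu
    refine ⟨‖u‖⁻¹ • u, hnorm, fun i => ?_⟩
    rw [← semiconjBy_iff_eq_conj (ne_zero_of_norm_eq_one hnorm), SemiconjBy, smul_mul_assoc,
      mul_smul_comm, (h i).eq]

lemma conjRel_iff_exists_semiconjBy {s t : GenusTwoRepSpace} :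
    conjRel s t ↔ ∃ u : Quaternion ℝ, ‖u‖ = 1 ∧
      SemiconjBy u s.1.1 t.1.1 ∧ SemiconjBy u s.1.2.1 t.1.2.1 ∧
      SemiconjBy u s.1.2.2.1 t.1.2.2.1 ∧ SemiconjBy u s.1.2.2.2 t.1.2.2.2 :=
  exists_congr fun u => and_congr_right fun hu => by
    simp only [semiconjBy_iff_eq_conj (ne_zero_of_norm_eq_one hu)]

lemma equivalence_conjRel : Equivalence conjRel where
  refl _ := conjRel_iff_exists_semiconjBy.2
    ⟨1, norm_one, .one_left _, .one_left _, .one_left _, .one_left _⟩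
  symm h := by
    obtain ⟨u, hu, hR, hS, hR', hS'⟩ := conjRel_iff_exists_semiconjBy.1 h
    exact conjRel_iff_exists_semiconjBy.2 ⟨u⁻¹, by rw [norm_inv, hu, inv_one],
      hR.inv_symm_left₀, hS.inv_symm_left₀, hR'.inv_symm_left₀, hS'.inv_symm_left₀⟩
  trans h k := by
    obtain ⟨u, hu, hR, hS, hR', hS'⟩ := conjRel_iff_exists_semiconjBy.1 h
    obtain ⟨v, hv, kR, kS, kR', kS'⟩ := conjRel_iff_exists_semiconjBy.1 k
    exact conjRel_iff_exists_semiconjBy.2 ⟨v * u, by rw [norm_mul, hu, hv, mul_one],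
      kR.mul_left hR, kS.mul_left hS, kR'.mul_left hR', kS'.mul_left hS'⟩

lemma conjRel_pstarRep {x y : SixPuncturedRepSpace} (h : conjRelY x y) :
    conjRel (pstarRep x) (pstarRep y) := by
  obtain ⟨u, hu, h⟩ := h
  have hconj := pstarTuple_conj x.1 (ne_zero_of_norm_eq_one hu)
  rw [← funext h] at hconj
  simp only [Prod.ext_iff] at hconj
  exact ⟨u, hu, hconj⟩

/-- The map `p* : χ(S²,6) → χ(F₂)`. -/
def pstar : ChiS26 → ChiF2 :=
  Quot.map pstarRep fun _ _ => conjRel_pstarRep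

/-- The involution `ν` of `χ(S²,6)` induced by negating all six entries. -/
def negInvolution : ChiS26 → ChiS26 :=
  Quot.map (fun x => ⟨fun i => -(x.1 i), x.2.neg⟩) fun _ _ ⟨u, hu, h⟩ =>
    ⟨u, hu, fun i => (congrArg Neg.neg (h i)).trans (by rw [mul_neg, neg_mul])⟩

lemma pstar_negInvolution (a : ChiS26) : pstar (negInvolution a) = pstar a := by
  induction a using Quot.ind with
  | mk x => exact congrArg (Quot.mk conjRel) (Subtype.ext (pstarTuple_neg x.1))

lemma exists_mk_eq_and_pstarTuple_eq {x y : SixPuncturedRepSpace}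
    (h : pstar (Quot.mk _ x) = pstar (Quot.mk _ y)) :
    ∃ x' : SixPuncturedRepSpace, (Quot.mk conjRelY x' : ChiS26) = Quot.mk _ x ∧
      pstarTuple x'.1 = pstarTuple y.1 := by
  obtain ⟨u, hu, hR, hS, hR', hS'⟩ : conjRel (pstarRep x) (pstarRep y) :=
    equivalence_conjRel.eqvGen_iff.1 (Quot.eqvGen_exact h)
  have hu₀ := ne_zero_of_norm_eq_one hu
  refine ⟨⟨_, x.2.conj hu₀⟩, (Quot.sound ⟨u, hu, fun _ => rfl⟩).symm, ?_⟩
  rw [pstarTuple_conj x.1 hu₀]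
  exact (Prod.ext hR (Prod.ext hS (Prod.ext hR' hS'))).symm

lemma pstar_eq_iff {a b : ChiS26} : pstar a = pstar b ↔ b = a ∨ b = negInvolution a := by
  refine ⟨fun h => ?_, ?_⟩
  · induction a using Quot.ind with
    | mk x =>
    induction b using Quot.ind with
    | mk y =>
    obtain ⟨x', hx', hxy⟩ := exists_mk_eq_and_pstarTuple_eq h
    rw [← hx']
    rcases x'.2.eq_neg_or_exists_semiconjBy y.2 hxy with hneg | hconj
    · exact .inr (congrArg (Quot.mk conjRelY) (Subtype.ext hneg))
    · exact .inl (Quot.sound (conjRelY_iff_exists_semiconjBy.2 hconj)).symm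
  · rintro (rfl | rfl)
    exacts [rfl, (pstar_negInvolution a).symm]

lemma isQuotientMap_pstar : Topology.IsQuotientMap pstar :=
  .of_comp continuous_quot_mk
    (continuous_quot_lift _ (continuous_quot_mk.comp continuous_pstarRep))
    (isQuotientMap_quot_mk.comp isQuotientMap_pstarRep :
      Topology.IsQuotientMap (Quot.mk conjRel ∘ pstarRep))

end CharacterVariety

/-- There is a well-defined continuous surjection `p* : χ(S²,6) → χ(F₂)` sending the class
of `(x₁,…,x₆)` to the class of `(x₁x₂, x₃⁻¹x₂⁻¹, x₄x₅, x₆⁻¹x₅⁻¹)`; it satisfies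
`p* ∘ ν = p*` for the involution `ν` induced by `(x₁,…,x₆) ↦ (−x₁,…,−x₆)`, and the induced
map on the quotient `χ(S²,6)/ν → χ(F₂)` is a homeomorphism. -/
theorem pstar_induces_homeomorph :
    ∃ p : ChiS26 → ChiF2,
      Continuous p ∧ Function.Surjective p ∧
      (∀ x : SixPuncturedRepSpace, ∃ h : memX (pstarTuple x.1),
        p (Quot.mk _ x) = Quot.mk conjRel ⟨pstarTuple x.1, h⟩) ∧
      ∃ ν : ChiS26 → ChiS26,
        (∀ x : SixPuncturedRepSpace, ∃ h : memY (fun i => -(x.1 i)),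
          ν (Quot.mk _ x) = Quot.mk conjRelY ⟨fun i => -(x.1 i), h⟩) ∧
        p ∘ ν = p ∧
        ∃ φ : Quot (fun a b : ChiS26 => b = a ∨ b = ν a) ≃ₜ ChiF2,
          ∀ y : ChiS26, φ (Quot.mk _ y) = p y := by
  have hp := isQuotientMap_pstar
  refine ⟨pstar, hp.continuous, hp.surjective, fun x => ⟨x.2.memX_pstarTuple, rfl⟩,
    negInvolution, fun x => ⟨x.2.neg, rfl⟩, funext pstar_negInvolution, ?_⟩
  exact ⟨(Homeomorph.Quot.congrRight fun _ _ => pstar_eq_iff.symm).trans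
    (Topology.IsQuotientMap.homeomorph (f := ⟨pstar, hp.continuous⟩) hp), fun _ => rfl⟩
end
end

section
/- Fix n ≥ 1. Let UTSⁿ = {(w₁,w₂) ∈ ℝⁿ⁺¹ × ℝⁿ⁺¹ : ‖w₁‖ = 1, ‖w₂‖ = 1, ⟨w₁,w₂⟩ = 0} (the unit tangent bundle of Sⁿ), let proj : ℝⁿ⁺¹ → ℝⁿ delete the last coordinate, and let τ : UTSⁿ → UTSⁿ negate the last coordinate of both w₁ and w₂. Then: (i) for every (w₁,w₂) ∈ UTSⁿ, (proj w₁, proj w₂) ≠ (0,0), so that p(w₁,w₂) := (proj w₁, proj w₂)/√(‖proj w₁‖² + ‖proj w₂‖²) is a well-defined map into the unit sphere S²ⁿ⁻¹ ⊂ ℝⁿ × ℝⁿ; (ii) p maps UTSⁿ onto S²ⁿ⁻¹; (iii) for w, w′ ∈ UTSⁿ, p(w) = p(w′) if and only if w′ = w or w′ = τ(w); (iv) the fixed point set of τ is exactly the set of (w₁,w₂) ∈ UTSⁿ whose last coordinates both vanish (a copy of UTSⁿ⁻¹). Consequently p induces a homeomorphism UTSⁿ/τ ≅ S²ⁿ⁻¹.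 -/
/-!
Encode a pair of real vectors `(x, y)` as the complex vector `z = x + iy`. Orthonormality of
`(w₁, w₂)` says that `|z|² = 2` and `z ⬝ z = 0`. Splitting off the last coordinate as `z = (v, c)`
with `c : ℂ`, this becomes `|v|² + |c|² = 2` and `v ⬝ v = -c²`, whence `|v|² + |v ⬝ v| = 2`. The
left side is positive and homogeneous of degree two in `v ≠ 0`, so each ray in the `v`-space carries
exactly one solution `v`, over which `c` ranges over the two square roots of `-(v ⬝ v)`, exchanged
by `τ`.
-/

noncomputable section

/-- The unit tangent bundle of `Sⁿ`: pairs of orthonormal vectors in `ℝⁿ⁺¹`. -/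
def UTS (n : ℕ) : Set (EuclideanSpace ℝ (Fin (n + 1)) × EuclideanSpace ℝ (Fin (n + 1))) :=
  {w | ‖w.1‖ = 1 ∧ ‖w.2‖ = 1 ∧ (inner ℝ w.1 w.2 : ℝ) = 0}

/-- `proj : ℝⁿ⁺¹ → ℝⁿ`, deleting the last coordinate. -/
def projMap (n : ℕ) (w : EuclideanSpace ℝ (Fin (n + 1))) : EuclideanSpace ℝ (Fin n) :=
  WithLp.toLp 2 (fun i => w i.castSucc)

/-- `τ`: negate the last coordinate of both entries of a pair. -/
def tauMap (n : ℕ) (w : EuclideanSpace ℝ (Fin (n + 1)) × EuclideanSpace ℝ (Fin (n + 1))) :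
    EuclideanSpace ℝ (Fin (n + 1)) × EuclideanSpace ℝ (Fin (n + 1)) :=
  (WithLp.toLp 2 (fun i => if i = Fin.last n then -(w.1 i) else w.1 i),
   WithLp.toLp 2 (fun i => if i = Fin.last n then -(w.2 i) else w.2 i))

/-- The map `p(w₁,w₂) = (proj w₁, proj w₂)/√(‖proj w₁‖² + ‖proj w₂‖²)`. -/
def pMap (n : ℕ) (w : EuclideanSpace ℝ (Fin (n + 1)) × EuclideanSpace ℝ (Fin (n + 1))) :
    EuclideanSpace ℝ (Fin n) × EuclideanSpace ℝ (Fin n) :=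
  (Real.sqrt (‖projMap n w.1‖ ^ 2 + ‖projMap n w.2‖ ^ 2))⁻¹ • (projMap n w.1, projMap n w.2)

lemma exists_homeomorph_quot {X Y : Type*} [TopologicalSpace X] [TopologicalSpace Y]
    {r : X → X → Prop} {f : X → Y} (hf : Topology.IsQuotientMap f)
    (hr : ∀ a b, f a = f b ↔ r a b) : ∃ φ : Quot r ≃ₜ Y, ∀ x, φ (Quot.mk r x) = f x := by
  obtain rfl : (Setoid.ker f).r = r := funext₂ fun a b => propext (hr a b)
  exact ⟨Topology.IsQuotientMap.homeomorph (f := ⟨f, hf.continuous⟩) hf, fun _ => rfl⟩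

section PairsOfVectors

variable {E : Type*} [NormedAddCommGroup E]

/-- The squared Hermitian norm of the complex vector `x + iy` encoded by `(x, y)`; the norm that
`E × E` carries in Mathlib is the sup norm instead. -/
def pairNormSq (v : E × E) : ℝ := ‖v.1‖ ^ 2 + ‖v.2‖ ^ 2

@[simp]
lemma pairNormSq_zero : pairNormSq (0 : E × E) = 0 := by
  simp [pairNormSq]

lemma pairNormSq_nonneg (v : E × E) : 0 ≤ pairNormSq v := by
  unfold pairNormSq; positivity

lemma pairNormSq_pos {v : E × E} (hv : v ≠ 0) : 0 < pairNormSq v := by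
  refine (pairNormSq_nonneg v).lt_of_ne' fun h => hv ?_
  obtain ⟨h₁, h₂⟩ := (add_eq_zero_iff_of_nonneg (sq_nonneg ‖v.1‖) (sq_nonneg ‖v.2‖)).1 h
  exact Prod.ext (by simpa using h₁) (by simpa using h₂)

lemma continuous_pairNormSq : Continuous (pairNormSq (E := E)) := by
  unfold pairNormSq
  fun_prop

section NormedSpace

variable [NormedSpace ℝ E]

/-- Radial projection of a pair of vectors onto the unit sphere of `pairNormSq`; it sends `0` to
`0`. -/
def pairNormalize (v : E × E) : E × E := (√(pairNormSq v))⁻¹ • v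

lemma pairNormSq_smul (r : ℝ) (v : E × E) : pairNormSq (r • v) = r ^ 2 * pairNormSq v := by
  simp only [pairNormSq, Prod.smul_fst, Prod.smul_snd, norm_smul, mul_pow, Real.norm_eq_abs, sq_abs,
    mul_add]

lemma sqrt_smul_pairNormalize (v : E × E) : √(pairNormSq v) • pairNormalize v = v := by
  rcases eq_or_ne v 0 with rfl | hv
  · simp
  · exact smul_inv_smul₀ (Real.sqrt_pos.2 (pairNormSq_pos hv)).ne' v

lemma pairNormSq_pairNormalize {v : E × E} (hv : v ≠ 0) : pairNormSq (pairNormalize v) = 1 := by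
  have hpos := pairNormSq_pos hv
  rw [pairNormalize, pairNormSq_smul, inv_pow, Real.sq_sqrt hpos.le, inv_mul_cancel₀ hpos.ne']

lemma pairNormalize_smul {r : ℝ} (hr : 0 < r) {u : E × E} (hu : pairNormSq u = 1) :
    pairNormalize (r • u) = u := by
  rw [pairNormalize, pairNormSq_smul, hu, mul_one, Real.sqrt_sq hr.le, inv_smul_smul₀ hr.ne']

end NormedSpace

section InnerProductSpace

variable [InnerProductSpace ℝ E]

/-- The complex bilinear square `(x + iy) ⬝ (x + iy)` of the complex vector encoded by `(x, y)`. -/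
def pairDotSelf (v : E × E) : ℂ := ⟨‖v.1‖ ^ 2 - ‖v.2‖ ^ 2, 2 * inner ℝ v.1 v.2⟩

@[simp]
lemma pairDotSelf_zero : pairDotSelf (0 : E × E) = 0 := by
  simp [pairDotSelf, Complex.ext_iff]

lemma pairDotSelf_smul (r : ℝ) (v : E × E) : pairDotSelf (r • v) = (r ^ 2 : ℝ) * pairDotSelf v := by
  apply Complex.ext
  · simp only [pairDotSelf, Prod.smul_fst, Prod.smul_snd, norm_smul, mul_pow, Real.norm_eq_abs,
      sq_abs, Complex.re_ofReal_mul, mul_sub]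
  · simp only [pairDotSelf, Prod.smul_fst, Prod.smul_snd, real_inner_smul_left,
      real_inner_smul_right, Complex.im_ofReal_mul]
    ring

lemma norm_pairDotSelf_eq_mul (v : E × E) :
    ‖pairDotSelf v‖ = pairNormSq v * ‖pairDotSelf (pairNormalize v)‖ := by
  conv_lhs => rw [← sqrt_smul_pairNormalize v]
  rw [pairDotSelf_smul, norm_mul, Complex.norm_real, Real.sq_sqrt (pairNormSq_nonneg v),
    Real.norm_of_nonneg (pairNormSq_nonneg v)]

lemma eq_of_pairNormalize_eq {v v' : E × E} (h : pairNormalize v = pairNormalize v')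
    (hsum : pairNormSq v + ‖pairDotSelf v‖ = pairNormSq v' + ‖pairDotSelf v'‖) : v = v' := by
  have hN : pairNormSq v = pairNormSq v' := by
    rw [norm_pairDotSelf_eq_mul v, norm_pairDotSelf_eq_mul v', h, ← mul_one_add, ← mul_one_add]
      at hsum
    exact mul_right_cancel₀ (by positivity) hsum
  rw [← sqrt_smul_pairNormalize v, ← sqrt_smul_pairNormalize v', h, hN]

lemma orthonormal_pair_iff (v : E × E) :
    (‖v.1‖ = 1 ∧ ‖v.2‖ = 1 ∧ inner ℝ v.1 v.2 = 0) ↔ pairNormSq v = 2 ∧ pairDotSelf v = 0 := by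
  simp only [pairNormSq, pairDotSelf, Complex.ext_iff, Complex.zero_re, Complex.zero_im]
  constructor
  · rintro ⟨h₁, h₂, h₃⟩
    norm_num [h₁, h₂, h₃]
  · rintro ⟨hsum, hdiff, hinner⟩
    refine ⟨?_, ?_, by linarith⟩ <;>
      exact (sq_eq_sq₀ (norm_nonneg _) zero_le_one).1 (by linarith)

end InnerProductSpace

end PairsOfVectors

section LastCoordinate

variable {n : ℕ}

lemma eq_of_projMap_eq {x y : EuclideanSpace ℝ (Fin (n + 1))} (hproj : projMap n x = projMap n y)
    (hlast : x (Fin.last n) = y (Fin.last n)) : x = y := by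
  ext i
  induction i using Fin.lastCases with
  | last => exact hlast
  | cast j => exact congrArg (fun z : EuclideanSpace ℝ (Fin n) => z j) hproj

lemma norm_sq_eq_projMap (x : EuclideanSpace ℝ (Fin (n + 1))) :
    ‖x‖ ^ 2 = ‖projMap n x‖ ^ 2 + x (Fin.last n) ^ 2 := by
  simp [EuclideanSpace.norm_sq_eq, Fin.sum_univ_castSucc, projMap]

lemma inner_eq_projMap (x y : EuclideanSpace ℝ (Fin (n + 1))) :
    inner ℝ x y = inner ℝ (projMap n x) (projMap n y) + x (Fin.last n) * y (Fin.last n) := by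
  simp [PiLp.inner_apply, Fin.sum_univ_castSucc, projMap, mul_comm]

lemma continuous_projMap : Continuous (projMap n) := by
  unfold projMap
  fun_prop

/-- The pair `(proj w₁, proj w₂)`: the complex vector `w₁ + iw₂` without its last coordinate. -/
def projPair (w : EuclideanSpace ℝ (Fin (n + 1)) × EuclideanSpace ℝ (Fin (n + 1))) :
    EuclideanSpace ℝ (Fin n) × EuclideanSpace ℝ (Fin n) :=
  (projMap n w.1, projMap n w.2)

/-- The last coordinate of the complex vector `w₁ + iw₂`. -/
def lastCoord (w : EuclideanSpace ℝ (Fin (n + 1)) × EuclideanSpace ℝ (Fin (n + 1))) : ℂ :=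
  ⟨w.1 (Fin.last n), w.2 (Fin.last n)⟩

lemma continuous_projPair : Continuous (projPair (n := n)) :=
  (continuous_projMap.comp continuous_fst).prodMk (continuous_projMap.comp continuous_snd)

lemma exists_projPair_eq_lastCoord_eq (v : EuclideanSpace ℝ (Fin n) × EuclideanSpace ℝ (Fin n))
    (c : ℂ) : ∃ w : EuclideanSpace ℝ (Fin (n + 1)) × EuclideanSpace ℝ (Fin (n + 1)),
      projPair w = v ∧ lastCoord w = c := by
  refine ⟨(WithLp.toLp 2 (Fin.snoc (α := fun _ => ℝ) v.1 c.re),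
    WithLp.toLp 2 (Fin.snoc (α := fun _ => ℝ) v.2 c.im)), ?_, ?_⟩
  · simp [projPair, projMap]
  · simp [lastCoord]

variable {w w' : EuclideanSpace ℝ (Fin (n + 1)) × EuclideanSpace ℝ (Fin (n + 1))}

lemma lastCoord_eq_zero_iff : lastCoord w = 0 ↔ w.1 (Fin.last n) = 0 ∧ w.2 (Fin.last n) = 0 :=
  Complex.ext_iff

lemma eq_of_projPair_eq_of_lastCoord_eq (hproj : projPair w = projPair w')
    (hlast : lastCoord w = lastCoord w') : w = w' := by
  obtain ⟨hproj₁, hproj₂⟩ := Prod.ext_iff.1 hproj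
  obtain ⟨hre, him⟩ := Complex.ext_iff.1 hlast
  exact Prod.ext (eq_of_projMap_eq hproj₁ hre) (eq_of_projMap_eq hproj₂ him)

variable (w)

lemma pMap_eq_pairNormalize : pMap n w = pairNormalize (projPair w) := rfl

@[simp]
lemma projPair_tauMap : projPair (tauMap n w) = projPair w := by
  simp [projPair, projMap, tauMap]

@[simp]
lemma lastCoord_tauMap : lastCoord (tauMap n w) = -lastCoord w := by
  simp [lastCoord, tauMap, Complex.ext_iff]

lemma tauMap_eq_self_iff : tauMap n w = w ↔ w.1 (Fin.last n) = 0 ∧ w.2 (Fin.last n) = 0 := by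
  rw [← lastCoord_eq_zero_iff, ← neg_eq_self, ← lastCoord_tauMap]
  exact ⟨congrArg lastCoord, eq_of_projPair_eq_of_lastCoord_eq (projPair_tauMap w)⟩

lemma pairNormSq_eq_projPair : pairNormSq w = pairNormSq (projPair w) + ‖lastCoord w‖ ^ 2 := by
  simp only [pairNormSq, projPair, lastCoord, norm_sq_eq_projMap, Complex.sq_norm,
    Complex.normSq_mk]
  ring

lemma pairDotSelf_eq_projPair : pairDotSelf w = pairDotSelf (projPair w) + lastCoord w ^ 2 := by
  rw [sq (lastCoord w)]
  apply Complex.ext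
  · simp only [pairDotSelf, projPair, lastCoord, norm_sq_eq_projMap, Complex.add_re, Complex.mul_re]
    ring
  · simp only [pairDotSelf, projPair, lastCoord, inner_eq_projMap, Complex.add_im, Complex.mul_im]
    ring

end LastCoordinate

section UnitTangentBundle

variable {n : ℕ} {w w' : EuclideanSpace ℝ (Fin (n + 1)) × EuclideanSpace ℝ (Fin (n + 1))}

lemma mem_UTS_iff :
    w ∈ UTS n ↔ pairNormSq (projPair w) + ‖lastCoord w‖ ^ 2 = 2 ∧
      pairDotSelf (projPair w) + lastCoord w ^ 2 = 0 := by
  rw [← pairNormSq_eq_projPair, ← pairDotSelf_eq_projPair]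
  exact orthonormal_pair_iff w

lemma pairNormSq_add_norm_pairDotSelf_projPair (hw : w ∈ UTS n) :
    pairNormSq (projPair w) + ‖pairDotSelf (projPair w)‖ = 2 := by
  obtain ⟨hnorm, hdot⟩ := mem_UTS_iff.1 hw
  rwa [eq_neg_of_add_eq_zero_left hdot, norm_neg, norm_pow]

lemma projPair_ne_zero (hw : w ∈ UTS n) : projPair w ≠ 0 := by
  intro h
  simpa [h] using pairNormSq_add_norm_pairDotSelf_projPair hw

lemma pairNormSq_pMap (hw : w ∈ UTS n) : pairNormSq (pMap n w) = 1 := by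
  rw [pMap_eq_pairNormalize, pairNormSq_pairNormalize (projPair_ne_zero hw)]

lemma exists_mem_UTS_pMap_eq {u : EuclideanSpace ℝ (Fin n) × EuclideanSpace ℝ (Fin n)}
    (hu : pairNormSq u = 1) : ∃ w ∈ UTS n, pMap n w = u := by
  obtain ⟨r, hr, hr_sq⟩ : ∃ r : ℝ, 0 < r ∧ r ^ 2 * (1 + ‖pairDotSelf u‖) = 2 := by
    have hpos : 0 < 2 / (1 + ‖pairDotSelf u‖) := by positivity
    refine ⟨√(2 / (1 + ‖pairDotSelf u‖)), Real.sqrt_pos.2 hpos, ?_⟩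
    rw [Real.sq_sqrt hpos.le, div_mul_cancel₀ _ (by positivity)]
  obtain ⟨c, hc⟩ : ∃ c : ℂ, c ^ 2 = -pairDotSelf (r • u) :=
    IsAlgClosed.exists_pow_nat_eq _ two_pos
  obtain ⟨w, hproj, hlast⟩ := exists_projPair_eq_lastCoord_eq (r • u) c
  refine ⟨w, mem_UTS_iff.2 ⟨?_, ?_⟩, ?_⟩
  · calc pairNormSq (projPair w) + ‖lastCoord w‖ ^ 2
        = pairNormSq (r • u) + ‖pairDotSelf (r • u)‖ := by
          rw [hproj, hlast, ← norm_pow, hc, norm_neg]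
      _ = r ^ 2 * (1 + ‖pairDotSelf u‖) := by
          rw [pairNormSq_smul, hu, pairDotSelf_smul, norm_mul, Complex.norm_real,
            Real.norm_of_nonneg (sq_nonneg r), mul_add]
      _ = 2 := hr_sq
  · rw [hproj, hlast, hc, add_neg_cancel]
  · rw [pMap_eq_pairNormalize, hproj, pairNormalize_smul hr hu]

lemma pMap_eq_pMap_iff (hw : w ∈ UTS n) (hw' : w' ∈ UTS n) :
    pMap n w = pMap n w' ↔ w' = w ∨ w' = tauMap n w := by
  constructor
  · intro h
    have hproj : projPair w' = projPair w := eq_of_pairNormalize_eq h.symm <| by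
      rw [pairNormSq_add_norm_pairDotSelf_projPair hw,
        pairNormSq_add_norm_pairDotSelf_projPair hw']
    have hsq : lastCoord w' ^ 2 = lastCoord w ^ 2 := by
      have hdot := (mem_UTS_iff.1 hw).2
      have hdot' := (mem_UTS_iff.1 hw').2
      rw [hproj] at hdot'
      exact add_left_cancel (hdot'.trans hdot.symm)
    rcases sq_eq_sq_iff_eq_or_eq_neg.1 hsq with hlast | hlast
    · exact .inl (eq_of_projPair_eq_of_lastCoord_eq hproj hlast)
    · exact .inr (eq_of_projPair_eq_of_lastCoord_eq (by rw [hproj, projPair_tauMap])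
        (by rw [hlast, lastCoord_tauMap]))
  · rintro (rfl | rfl)
    · rfl
    · rw [pMap_eq_pairNormalize, pMap_eq_pairNormalize, projPair_tauMap]

lemma isCompact_UTS : IsCompact (UTS n) := by
  have hclosed : IsClosed {w : EuclideanSpace ℝ (Fin (n + 1)) × EuclideanSpace ℝ (Fin (n + 1)) |
      inner ℝ w.1 w.2 = 0} := isClosed_eq (by fun_prop) continuous_const
  convert ((isCompact_sphere 0 1).prod (isCompact_sphere 0 1)).inter_right hclosed using 1
  ext w
  simp [UTS, and_assoc]

lemma continuousOn_pMap : ContinuousOn (pMap n) (UTS n) := by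
  have hradius : Continuous fun w => √(pairNormSq (projPair (n := n) w)) :=
    (continuous_pairNormSq.comp continuous_projPair).sqrt
  have hradius_ne : ∀ w ∈ UTS n, √(pairNormSq (projPair w)) ≠ 0 := fun w hw =>
    (Real.sqrt_pos.2 (pairNormSq_pos (projPair_ne_zero hw))).ne'
  exact (hradius.continuousOn.inv₀ hradius_ne).smul continuous_projPair.continuousOn

end UnitTangentBundle

/-- The double branched cover `UTSⁿ → S²ⁿ⁻¹`: `p` is well defined, onto the unit sphere of
`ℝⁿ × ℝⁿ`, its fibers are exactly the orbits `{w, τ w}` of the involution `τ`, the fixed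
set of `τ` is the copy of `UTSⁿ⁻¹` where both last coordinates vanish, and `p` induces a
homeomorphism `UTSⁿ/τ ≅ S²ⁿ⁻¹`. -/
theorem uts_double_branched_cover (n : ℕ) (hn : 1 ≤ n) :
    (∀ w ∈ UTS n, (projMap n w.1, projMap n w.2) ≠ (0, 0)) ∧
    (∀ w ∈ UTS n, ‖(pMap n w).1‖ ^ 2 + ‖(pMap n w).2‖ ^ 2 = 1) ∧
    (∀ v : EuclideanSpace ℝ (Fin n) × EuclideanSpace ℝ (Fin n),
      ‖v.1‖ ^ 2 + ‖v.2‖ ^ 2 = 1 → ∃ w ∈ UTS n, pMap n w = v) ∧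
    (∀ w ∈ UTS n, ∀ w' ∈ UTS n, (pMap n w = pMap n w' ↔ (w' = w ∨ w' = tauMap n w))) ∧
    (∀ w ∈ UTS n, (tauMap n w = w ↔ (w.1 (Fin.last n) = 0 ∧ w.2 (Fin.last n) = 0))) ∧
    ∃ φ : Quot (fun a b : UTS n => b = a ∨ (b : _) = tauMap n a) ≃ₜ
        {v : EuclideanSpace ℝ (Fin n) × EuclideanSpace ℝ (Fin n) // ‖v.1‖ ^ 2 + ‖v.2‖ ^ 2 = 1},
      ∀ w : UTS n, ((φ (Quot.mk _ w)) : EuclideanSpace ℝ (Fin n) × EuclideanSpace ℝ (Fin n))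
        = pMap n (w : _) := by
  refine ⟨fun _ => projPair_ne_zero, fun _ => pairNormSq_pMap, fun _ => exists_mem_UTS_pMap_eq,
    fun _ hw _ => pMap_eq_pMap_iff hw, fun w _ => tauMap_eq_self_iff w, ?_⟩
  have : CompactSpace (UTS n) := isCompact_iff_compactSpace.1 isCompact_UTS
  let p (w : UTS n) : {v : EuclideanSpace ℝ (Fin n) × EuclideanSpace ℝ (Fin n) //
      ‖v.1‖ ^ 2 + ‖v.2‖ ^ 2 = 1} := ⟨pMap n w, pairNormSq_pMap w.2⟩
  have hp_cont : Continuous p := continuousOn_pMap.domRestrict.subtype_mk _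
  have hp_surj : p.Surjective := fun ⟨v, hv⟩ =>
    let ⟨w, hw, hwv⟩ := exists_mem_UTS_pMap_eq hv
    ⟨⟨w, hw⟩, Subtype.ext hwv⟩
  have hp_fiber (a b : UTS n) : p a = p b ↔ b = a ∨ (b : _) = tauMap n a := by
    rw [Subtype.ext_iff, Subtype.ext_iff]
    exact pMap_eq_pMap_iff a.2 b.2
  have hp_quot := hp_cont.isClosedMap.isQuotientMap hp_cont hp_surj
  obtain ⟨φ, hφ⟩ := exists_homeomorph_quot hp_quot hp_fiber
  exact ⟨φ, fun w => congrArg Subtype.val (hφ w)⟩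
end
end

section
/- Define W(a,b) = (Re a, Re b, Re(a·star b)) for unit quaternions a, b. Then the image of W on SU(2) × SU(2) is exactly the Goldman pillow B = {(x,y,z) ∈ ℝ³ : x² + y² + z² − 2xyz ≤ 1, |x| ≤ 1, |y| ≤ 1, |z| ≤ 1}; that is, every pair of unit quaternions (a,b) satisfies (Re a)² + (Re b)² + (Re(a·star b))² − 2·(Re a)·(Re b)·(Re(a·star b)) ≤ 1, and every point of B arises as W(a,b) for some pair of unit quaternions. -/
/-!
For a unit vector `e` in a real inner product space, subtracting their `e`-components from two unit
vectors `a` and `b` with `⟪e, a⟫ = x`, `⟪e, b⟫ = y` and `⟪a, b⟫ = z` leaves vectors orthogonal to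
`e`, of squared norms `1 - x ^ 2` and `1 - y ^ 2` and with inner product `z - x * y`. The pillow
inequality `x ^ 2 + y ^ 2 + z ^ 2 - 2 * x * y * z ≤ 1` is Cauchy–Schwarz for these two vectors:
`(z - x * y) ^ 2 ≤ (1 - x ^ 2) * (1 - y ^ 2)`. Conversely, if the orthogonal complement of `e` has
dimension at least two, then its spheres are connected, and the intermediate value theorem realizes
every inner product that Cauchy–Schwarz allows. The quaternions are the case `e = 1`, since
`a.re = ⟪1, a⟫` and `(a * star b).re = ⟪a, b⟫`.
-/

open scoped RealInnerProductSpace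

theorem rank_add_rank_orthogonal {𝕜 E : Type*} [RCLike 𝕜] [NormedAddCommGroup E]
    [InnerProductSpace 𝕜 E] (K : Submodule 𝕜 E) [K.HasOrthogonalProjection] :
    Module.rank 𝕜 K + Module.rank 𝕜 Kᗮ = Module.rank 𝕜 E := by
  rw [← rank_prod', (K.prodEquivOfIsCompl Kᗮ K.isCompl_orthogonal).rank_eq]

theorem sq_sub_mul_le_one_sub_sq_mul_one_sub_sq_iff {R : Type*} [CommRing R]
    [LinearOrder R] [IsStrictOrderedRing R] {x y z : R} :
    (z - x * y) ^ 2 ≤ (1 - x ^ 2) * (1 - y ^ 2) ↔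
      x ^ 2 + y ^ 2 + z ^ 2 - 2 * x * y * z ≤ 1 := by
  constructor <;> intro h <;> linarith

section InnerProductSpace

variable {E : Type*} [NormedAddCommGroup E] [InnerProductSpace ℝ E]

theorem one_lt_rank_orthogonal_span_singleton (hE : 2 < Module.rank ℝ E) (e : E) :
    1 < Module.rank ℝ (ℝ ∙ e)ᗮ := by
  by_contra! h
  have hspan : Module.rank ℝ (ℝ ∙ e) ≤ 1 := by
    simpa using rank_span_le (R := ℝ) ({e} : Set E)
  refine hE.not_ge ?_
  calc Module.rank ℝ E = Module.rank ℝ (ℝ ∙ e) + Module.rank ℝ (ℝ ∙ e)ᗮ :=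
        (rank_add_rank_orthogonal _).symm
    _ ≤ 1 + 1 := add_le_add hspan h
    _ = 2 := one_add_one_eq_two

theorem exists_norm_eq_and_inner_eq (hE : 1 < Module.rank ℝ E) (p : E) {s c : ℝ}
    (hs : 0 ≤ s) (hc : |c| ≤ ‖p‖ * s) : ∃ q : E, ‖q‖ = s ∧ ⟪p, q⟫ = c := by
  have : Nontrivial E := rank_pos_iff_nontrivial.mp (zero_lt_one.trans hE)
  obtain ⟨u, hu, hpu⟩ : ∃ u : E, ‖u‖ = s ∧ ⟪p, u⟫ = ‖p‖ * s := by
    rcases eq_or_ne p 0 with rfl | hp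
    · simpa using exists_norm_eq E hs
    · have hp' : ‖p‖ ≠ 0 := norm_ne_zero_iff.mpr hp
      refine ⟨(s / ‖p‖) • p, ?_, ?_⟩
      · rw [norm_smul, Real.norm_of_nonneg (by positivity), div_mul_cancel₀ _ hp']
      · rw [real_inner_smul_right, real_inner_self_eq_norm_sq]
        field_simp
  have hsphere : IsPreconnected (Metric.sphere (0 : E) s) := isPreconnected_sphere hE 0 s
  obtain ⟨q, hq, hpq⟩ := hsphere.intermediate_value (a := -u) (b := u) (f := fun v ↦ ⟪p, v⟫)
    (by simpa using hu) (by simpa using hu) (by fun_prop)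
    (show c ∈ Set.Icc ⟪p, -u⟫ ⟪p, u⟫ by simpa [hpu] using abs_le.mp hc)
  exact ⟨q, by simpa using hq, hpq⟩

theorem inner_sub_inner_smul_eq_zero {e : E} (he : ‖e‖ = 1) (a : E) : ⟪e, a - ⟪e, a⟫ • e⟫ = 0 := by
  simp [inner_sub_right, real_inner_smul_right, he]

theorem inner_sub_inner_smul_sub_inner_smul {e : E} (he : ‖e‖ = 1) (a b : E) :
    ⟪a - ⟪e, a⟫ • e, b - ⟪e, b⟫ • e⟫ = ⟪a, b⟫ - ⟪e, a⟫ * ⟪e, b⟫ := by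
  rw [inner_sub_left, real_inner_smul_left, inner_sub_inner_smul_eq_zero he, inner_sub_right,
    real_inner_smul_right, real_inner_comm e a]
  ring

theorem norm_sub_inner_smul_sq {e : E} (he : ‖e‖ = 1) (a : E) :
    ‖a - ⟪e, a⟫ • e‖ ^ 2 = ‖a‖ ^ 2 - ⟪e, a⟫ ^ 2 := by
  rw [← real_inner_self_eq_norm_sq, inner_sub_inner_smul_sub_inner_smul he,
    real_inner_self_eq_norm_sq, sq ⟪e, a⟫]

theorem sq_inner_sub_inner_mul_inner_le {e : E} (he : ‖e‖ = 1) (a b : E) :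
    (⟪a, b⟫ - ⟪e, a⟫ * ⟪e, b⟫) ^ 2 ≤ (‖a‖ ^ 2 - ⟪e, a⟫ ^ 2) * (‖b‖ ^ 2 - ⟪e, b⟫ ^ 2) := by
  rw [← inner_sub_inner_smul_sub_inner_smul he, ← norm_sub_inner_smul_sq he,
    ← norm_sub_inner_smul_sq he, ← mul_pow, sq_le_sq, abs_mul, abs_norm, abs_norm]
  exact abs_real_inner_le_norm _ _

theorem exists_norm_eq_and_inner_eq_and_inner_eq (hE : 2 < Module.rank ℝ E) {e : E}
    (he : ‖e‖ = 1) (a : E) {s y z : ℝ} (hy : |y| ≤ s)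
    (h : (z - ⟪e, a⟫ * y) ^ 2 ≤ (‖a‖ ^ 2 - ⟪e, a⟫ ^ 2) * (s ^ 2 - y ^ 2)) :
    ∃ b : E, ‖b‖ = s ∧ ⟪e, b⟫ = y ∧ ⟪a, b⟫ = z := by
  have hs : 0 ≤ s := (abs_nonneg y).trans hy
  have hsy : 0 ≤ s ^ 2 - y ^ 2 := sub_nonneg.mpr (sq_le_sq.mpr (by rwa [abs_of_nonneg hs]))
  let p : (ℝ ∙ e)ᗮ := ⟨a - ⟪e, a⟫ • e,
    Submodule.mem_orthogonal_singleton_iff_inner_right.mpr (inner_sub_inner_smul_eq_zero he a)⟩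
  have hp : ‖p‖ ^ 2 = ‖a‖ ^ 2 - ⟪e, a⟫ ^ 2 := norm_sub_inner_smul_sq he a
  have hc : |z - ⟪e, a⟫ * y| ≤ ‖p‖ * √(s ^ 2 - y ^ 2) :=
    abs_le_of_sq_le_sq (by rwa [mul_pow, hp, Real.sq_sqrt hsy]) (by positivity)
  obtain ⟨q, hq, hpq⟩ := exists_norm_eq_and_inner_eq
    (one_lt_rank_orthogonal_span_singleton hE e) p (Real.sqrt_nonneg _) hc
  have heq : ⟪e, (q : E)⟫ = 0 := Submodule.mem_orthogonal_singleton_iff_inner_right.mp q.2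
  have haq : ⟪a, (q : E)⟫ = z - ⟪e, a⟫ * y := by
    simpa [p, inner_sub_left, real_inner_smul_left, heq] using hpq
  refine ⟨y • e + q, ?_, ?_, ?_⟩
  · rw [← sq_eq_sq₀ (norm_nonneg _) hs, norm_add_sq_real, real_inner_smul_left, heq, norm_smul, he,
      Submodule.norm_coe, hq, Real.sq_sqrt hsy, mul_one, Real.norm_eq_abs, sq_abs]
    ring
  · rw [inner_add_right, real_inner_smul_right, real_inner_self_eq_norm_sq, he, heq]
    ring
  · rw [inner_add_right, real_inner_smul_right, haq, real_inner_comm]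
    ring

theorem goldman_pillow_image_general (hE : 2 < Module.rank ℝ E) {e : E} (he : ‖e‖ = 1)
    (x y z : ℝ) :
    (∃ a b : E, ‖a‖ = 1 ∧ ‖b‖ = 1 ∧ ⟪e, a⟫ = x ∧ ⟪e, b⟫ = y ∧ ⟪a, b⟫ = z) ↔
      x ^ 2 + y ^ 2 + z ^ 2 - 2 * x * y * z ≤ 1 ∧ |x| ≤ 1 ∧ |y| ≤ 1 ∧ |z| ≤ 1 := by
  constructor
  · rintro ⟨a, b, ha, hb, rfl, rfl, rfl⟩
    have abs_inner_le_one {u v : E} (hu : ‖u‖ = 1) (hv : ‖v‖ = 1) : |⟪u, v⟫| ≤ 1 := by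
      simpa [hu, hv] using abs_real_inner_le_norm u v
    refine ⟨sq_sub_mul_le_one_sub_sq_mul_one_sub_sq_iff.mp ?_, abs_inner_le_one he ha,
      abs_inner_le_one he hb, abs_inner_le_one ha hb⟩
    simpa [ha, hb] using sq_inner_sub_inner_mul_inner_le he a b
  · rintro ⟨h, hx, hy, -⟩
    obtain ⟨a, ha, rfl⟩ := exists_norm_eq_and_inner_eq (Cardinal.one_lt_two.trans hE) e zero_le_one
      (by simpa [he] using hx)
    obtain ⟨b, hb, hby, hbz⟩ := exists_norm_eq_and_inner_eq_and_inner_eq hE he a hy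
      (by simpa [ha] using sq_sub_mul_le_one_sub_sq_mul_one_sub_sq_iff.mpr h)
    exact ⟨a, b, ha, hb, rfl, hby, hbz⟩

end InnerProductSpace

theorem exists_quaternion_re_eq_iff (x y z : ℝ) :
    (∃ a b : Quaternion ℝ, ‖a‖ = 1 ∧ ‖b‖ = 1 ∧ a.re = x ∧ b.re = y ∧ (a * star b).re = z) ↔
      x ^ 2 + y ^ 2 + z ^ 2 - 2 * x * y * z ≤ 1 ∧ |x| ≤ 1 ∧ |y| ≤ 1 ∧ |z| ≤ 1 := by
  have hrank : 2 < Module.rank ℝ (Quaternion ℝ) := by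
    rw [Quaternion.rank_eq_four]
    norm_num
  simpa only [Quaternion.inner_def, one_mul, Quaternion.re_star] using
    goldman_pillow_image_general hrank (e := (1 : Quaternion ℝ)) norm_one x y z

/-- The image of `W(a,b) = (Re a, Re b, Re(a·star b))` on pairs of unit quaternions is
exactly the Goldman pillow `B = {(x,y,z) : x²+y²+z²−2xyz ≤ 1, |x| ≤ 1, |y| ≤ 1, |z| ≤ 1}`. -/
theorem goldman_pillow_image :
    (∀ a b : Quaternion ℝ, ‖a‖ = 1 → ‖b‖ = 1 →
      a.re ^ 2 + b.re ^ 2 + (a * star b).re ^ 2 - 2 * a.re * b.re * (a * star b).re ≤ 1 ∧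
      |a.re| ≤ 1 ∧ |b.re| ≤ 1 ∧ |(a * star b).re| ≤ 1) ∧
    (∀ x y z : ℝ, x ^ 2 + y ^ 2 + z ^ 2 - 2 * x * y * z ≤ 1 →
      |x| ≤ 1 → |y| ≤ 1 → |z| ≤ 1 →
      ∃ a b : Quaternion ℝ, ‖a‖ = 1 ∧ ‖b‖ = 1 ∧
        a.re = x ∧ b.re = y ∧ (a * star b).re = z) :=
  ⟨fun a b ha hb ↦ (exists_quaternion_re_eq_iff _ _ _).mp ⟨a, b, ha, hb, rfl, rfl, rfl⟩,
    fun x y z h hx hy hz ↦ (exists_quaternion_re_eq_iff x y z).mpr ⟨h, hx, hy, hz⟩⟩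
end

section
/- Define W(a,b) = (Re a, Re b, Re(a·star b)) for unit quaternions a, b. Then for unit quaternions a, b, c, d, one has W(a,b) = W(c,d) if and only if there exists a unit quaternion u with c = u·a·u⁻¹ and d = u·b·u⁻¹. In other words, W separates conjugacy classes of pairs of unit quaternions under simultaneous conjugation. -/
/-!
If `a` and `c` have the same real part and norm, then `c x - x ā = x a - c̄ x` intertwines `a` and
`c` for every `x`, and some `x` makes it nonzero unless `a = c` is real. After this first
conjugation we may assume `a = c`, and look for an element `s + a` of the centralizer of `a`, with
`s` real, that carries `b` to `d`. The equation `(s + a) b = d (s + a)` reads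
`d a - a b = s (b - d)`. Its left side is, up to a multiple of `b - d`, the cross product of the
imaginary parts of `b + d` and `a`; as `b - d` is orthogonal to `1`, `a` and `b + d`, the two sides
are proportional.
-/

open Quaternion

section CommRing

variable {R : Type*} [CommRing R] {a b c d u : ℍ[R]}

lemma re_mul_comm (p q : ℍ[R]) : (p * q).re = (q * p).re := by
  simp only [re_mul]
  ring

lemma semiconjBy_star_of_re_eq (hre : a.re = c.re) (h : SemiconjBy u a c) :
    SemiconjBy u (star a) (star c) := by
  rw [star_eq_two_re_sub, star_eq_two_re_sub, hre]
  exact SemiconjBy.sub_right (coe_commute _ u).symm h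

lemma semiconjBy_mul_sub_mul_star (hre : a.re = c.re) (hnorm : normSq a = normSq c)
    (x : ℍ[R]) : SemiconjBy (c * x - x * star a) a c := by
  have hstar : x * a - star c * x = c * x - x * star a := by
    rw [star_eq_two_re_sub a, star_eq_two_re_sub c, hre, mul_sub, sub_mul, coe_commutes]
    abel
  calc
    (c * x - x * star a) * a = c * x * a - x * (star a * a) := by noncomm_ring
    _ = c * x * a - c * star c * x := by
      rw [star_mul_self, self_mul_star, hnorm, coe_commutes]
    _ = c * (x * a - star c * x) := by noncomm_ring
    _ = c * (c * x - x * star a) := by rw [hstar]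

lemma eq_coe_re_of_forall_commute [NoZeroDivisors R] [CharZero R] (h : ∀ x, Commute c x) :
    c = c.re := by
  let i : ℍ[R] := ⟨0, 1, 0, 0⟩
  let j : ℍ[R] := ⟨0, 0, 1, 0⟩
  have hI := congrArg (fun q ↦ q.imK) (h j).eq
  have hJ := congrArg (fun q ↦ q.imK) (h i).eq
  have hK := congrArg (fun q ↦ q.imJ) (h i).eq
  simp only [imJ_mul, imK_mul] at hI hJ hK
  simp only [mul_zero, mul_one, zero_add, sub_zero, add_zero, zero_mul, one_mul, zero_sub,
    sub_self, self_eq_neg, neg_eq_self, i, j] at hI hJ hK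
  ext <;> simp [hI, hJ, hK]

lemma im_mul_star_sub_eq_zero (hre : b.re = d.re) (hnorm : normSq b = normSq d)
    (hinner : (a * star b).re = (a * star d).re) :
    ((d * a - a * b) * star (b - d)).im = 0 := by
  rw [normSq_def', normSq_def', hre] at hnorm
  simp only [re_mul, re_star, imI_star, imJ_star, imK_star, hre] at hinner
  -- Let `p`, `q`, `s` be the imaginary parts of `a`, `b`, `d`, and `σ = q + s`, `δ = q - s`. The
  -- left-hand side is `(p × σ) × δ - (p ⬝ δ) δ`, with `(p × σ) × δ = (p ⬝ δ) σ - (σ ⬝ δ) p`, while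
  -- `hinner` says that `p ⬝ δ = 0` and `hnorm` that `σ ⬝ δ = 0`.
  ext
  · rfl
  all_goals simp only [imI_im, imJ_im, imK_im, imI_mul, imJ_mul, imK_mul, re_mul, re_sub, imI_sub,
    imJ_sub, imK_sub, re_star, imI_star, imJ_star, imK_star, imI_zero, imJ_zero, imK_zero, hre]
  · linear_combination 2 * d.imI * hinner - a.imI * hnorm
  · linear_combination 2 * d.imJ * hinner - a.imJ * hnorm
  · linear_combination 2 * d.imK * hinner - a.imK * hnorm

end CommRing

section OrderedField

variable {R : Type*} [Field R] [LinearOrder R] [IsStrictOrderedRing R] {a b c d u : ℍ[R]}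

lemma re_eq_of_semiconjBy (hu : u ≠ 0) (h : SemiconjBy u a c) : a.re = c.re :=
  calc
    a.re = (u⁻¹ * (u * a)).re := by rw [inv_mul_cancel_left₀ hu]
    _ = (c * u * u⁻¹).re := by rw [h.eq, re_mul_comm]
    _ = c.re := by rw [mul_inv_cancel_right₀ hu]

lemma re_mul_star_eq_of_semiconjBy (hu : u ≠ 0) (hac : SemiconjBy u a c)
    (hbd : SemiconjBy u b d) : (a * star b).re = (c * star d).re :=
  re_eq_of_semiconjBy hu (hac.mul_right (semiconjBy_star_of_re_eq (re_eq_of_semiconjBy hu hbd) hbd))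

lemma normSq_eq_of_semiconjBy (hu : u ≠ 0) (h : SemiconjBy u a c) : normSq a = normSq c :=
  re_mul_star_eq_of_semiconjBy hu h h

lemma exists_ne_zero_semiconjBy (hre : a.re = c.re) (hnorm : normSq a = normSq c) :
    ∃ u ≠ 0, SemiconjBy u a c := by
  by_cases h : ∀ x, c * x = x * star a
  · have hc : c = star a := by simpa using h 1
    have hreal : c = c.re := eq_coe_re_of_forall_commute fun x ↦ by rw [Commute, SemiconjBy, h, hc]
    have hac : a = c := by rw [← star_star a, ← hc, star_eq_self.mpr hreal]
    exact ⟨1, one_ne_zero, hac ▸ SemiconjBy.one_left a⟩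
  · obtain ⟨x, hx⟩ := not_forall.mp h
    exact ⟨c * x - x * star a, sub_ne_zero.mpr hx, semiconjBy_mul_sub_mul_star hre hnorm x⟩

lemma exists_eq_coe_mul_of_im_mul_star_eq_zero {p q : ℍ[R]} (hq : q ≠ 0)
    (h : (p * star q).im = 0) : ∃ s : R, p = s * q := by
  have him : (p * q⁻¹).im = 0 := by rw [inv_def, mul_smul_comm, im_smul, h, smul_zero]
  refine ⟨(p * q⁻¹).re, (mul_inv_eq_iff_eq_mul₀ hq).mp ?_⟩
  rw [← sub_eq_zero, sub_re_self, him]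

lemma exists_ne_zero_commute_and_semiconjBy (hre : b.re = d.re) (hnorm : normSq b = normSq d)
    (hinner : (a * star b).re = (a * star d).re) :
    ∃ u ≠ 0, Commute u a ∧ SemiconjBy u b d := by
  by_cases hbd : b = d
  · exact ⟨1, one_ne_zero, Commute.one_left a, hbd ▸ SemiconjBy.one_left b⟩
  by_cases ha : a = a.re
  · obtain ⟨u, hu, hub⟩ := exists_ne_zero_semiconjBy hre hnorm
    exact ⟨u, hu, ha ▸ (coe_commute _ u).symm, hub⟩
  obtain ⟨s, hs⟩ := exists_eq_coe_mul_of_im_mul_star_eq_zero (sub_ne_zero.mpr hbd)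
    (im_mul_star_sub_eq_zero hre hnorm hinner)
  refine ⟨s + a, fun h ↦ ha ?_, (coe_commute s a).add_left (Commute.refl a), ?_⟩
  · exact eq_re_of_eq_coe (x := -s) (by rw [coe_neg, eq_neg_of_add_eq_zero_right h])
  · rw [mul_sub, sub_eq_sub_iff_add_eq_add] at hs
    rw [SemiconjBy, add_mul, mul_add, ← coe_commutes s d, add_comm _ (d * a), hs]

theorem exists_ne_zero_semiconjBy_and_semiconjBy_iff :
    (∃ u ≠ 0, SemiconjBy u a c ∧ SemiconjBy u b d) ↔
      normSq a = normSq c ∧ normSq b = normSq d ∧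
        a.re = c.re ∧ b.re = d.re ∧ (a * star b).re = (c * star d).re := by
  constructor
  · rintro ⟨u, hu, hac, hbd⟩
    exact ⟨normSq_eq_of_semiconjBy hu hac, normSq_eq_of_semiconjBy hu hbd,
      re_eq_of_semiconjBy hu hac, re_eq_of_semiconjBy hu hbd,
      re_mul_star_eq_of_semiconjBy hu hac hbd⟩
  · rintro ⟨hnac, hnbd, hac, hbd, hinner⟩
    obtain ⟨v, hv, hvac⟩ := exists_ne_zero_semiconjBy hac hnac
    have hvb : SemiconjBy v b (v * b * v⁻¹) := (inv_mul_cancel_right₀ hv _).symm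
    obtain ⟨w, hw, hwc, hwd⟩ := exists_ne_zero_commute_and_semiconjBy (a := c)
      ((re_eq_of_semiconjBy hv hvb).symm.trans hbd)
      ((normSq_eq_of_semiconjBy hv hvb).symm.trans hnbd)
      ((re_mul_star_eq_of_semiconjBy hv hvac hvb).symm.trans hinner)
    exact ⟨w * v, mul_ne_zero hw hv, SemiconjBy.mul_left hwc hvac, hwd.mul_left hvb⟩

end OrderedField

lemma exists_norm_eq_one_conj_iff_exists_ne_zero_semiconjBy {D : Type*} [NormedDivisionRing D]
    [NormedAlgebra ℝ D] {a b c d : D} :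
    (∃ u : D, ‖u‖ = 1 ∧ c = u * a * u⁻¹ ∧ d = u * b * u⁻¹) ↔
      ∃ u ≠ 0, SemiconjBy u a c ∧ SemiconjBy u b d := by
  constructor
  · rintro ⟨u, hnorm, hac, hbd⟩
    have hu : u ≠ 0 := norm_ne_zero_iff.mp (hnorm ▸ one_ne_zero)
    exact ⟨u, hu, ((eq_mul_inv_iff_mul_eq₀ hu).mp hac).symm,
      ((eq_mul_inv_iff_mul_eq₀ hu).mp hbd).symm⟩
  · rintro ⟨u, hu, hac, hbd⟩
    have hnorm : ‖‖u‖⁻¹ • u‖ = 1 := norm_smul_inv_norm (𝕜 := ℝ) hu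
    have hne : ‖u‖⁻¹ • u ≠ 0 := norm_ne_zero_iff.mp (hnorm ▸ one_ne_zero)
    exact ⟨‖u‖⁻¹ • u, hnorm, (eq_mul_inv_iff_mul_eq₀ hne).mpr (hac.smul_left _).eq.symm,
      (eq_mul_inv_iff_mul_eq₀ hne).mpr (hbd.smul_left _).eq.symm⟩

theorem W_separates_conjugacy_classes_general (a b c d : ℍ[ℝ]) (hac : ‖a‖ = ‖c‖)
    (hbd : ‖b‖ = ‖d‖) :
    (a.re = c.re ∧ b.re = d.re ∧ (a * star b).re = (c * star d).re) ↔
      ∃ u : ℍ[ℝ], ‖u‖ = 1 ∧ c = u * a * u⁻¹ ∧ d = u * b * u⁻¹ := by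
  simp [exists_norm_eq_one_conj_iff_exists_ne_zero_semiconjBy,
    exists_ne_zero_semiconjBy_and_semiconjBy_iff, normSq_eq_norm_mul_self, hac, hbd]

/-- `W(a,b) = (Re a, Re b, Re(a·star b))` separates conjugacy classes of pairs of unit
quaternions under simultaneous conjugation: `W(a,b) = W(c,d)` iff `(c,d) = (uau⁻¹, ubu⁻¹)`
for some unit quaternion `u`. -/
theorem W_separates_conjugacy_classes (a b c d : Quaternion ℝ)
    (ha : ‖a‖ = 1) (hb : ‖b‖ = 1) (hc : ‖c‖ = 1) (hd : ‖d‖ = 1) :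
    (a.re = c.re ∧ b.re = d.re ∧ (a * star b).re = (c * star d).re) ↔
      ∃ u : Quaternion ℝ, ‖u‖ = 1 ∧ c = u * a * u⁻¹ ∧ d = u * b * u⁻¹ :=
  W_separates_conjugacy_classes_general a b c d (ha.trans hc.symm) (hb.trans hd.symm)
end

section
/- For unit quaternions a, b, set x = Re a, y = Re b, z = Re(a·star b). Then a and b commute (a·b = b·a) if and only if x² + y² + z² − 2xyz = 1. Hence the abelian locus of the character variety of the rank two free group corresponds under W(a,b) = (x,y,z) exactly to the pillowcase, the boundary of the Goldman pillow. -/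
/-!
For unit quaternions the commutator `a b a⁻¹ b⁻¹` is `a * b * star a * star b`, and
`‖a b - b a‖² = 2 (1 - Re (a b a⁻¹ b⁻¹))`. The Fricke trace identity expresses
`Re (a b a⁻¹ b⁻¹)` as `2 (x² + y² + z² - 2 x y z) - 1`, so `‖a b - b a‖²` is four times the defect
in the pillowcase equation. Homogenized by the norms of `a` and `b`, these identities hold for
quaternions of any norm.
-/

open Quaternion

section CommRing

variable {R : Type*} [CommRing R] (a b : ℍ[R])

theorem mul_self_eq_two_re_smul_sub_normSq : a * a = (2 * a.re) • a - ↑(normSq a) := by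
  rw [← self_mul_star, star_eq_two_re_sub, mul_sub, mul_coe_eq_smul, sub_sub_cancel]

theorem re_mul_self_mul_star_mul_star :
    (a * a * (star b * star b)).re =
      4 * a.re * b.re * (a * star b).re - 2 * normSq b * a.re ^ 2 - 2 * normSq a * b.re ^ 2
        + normSq a * normSq b := by
  rw [mul_self_eq_two_re_smul_sub_normSq a, mul_self_eq_two_re_smul_sub_normSq (star b),
    normSq_star, re_star]
  simp only [sub_mul, mul_sub, smul_mul_assoc, mul_smul_comm, coe_mul_eq_smul, mul_coe_eq_smul,
    re_sub, re_smul, re_star, re_coe, smul_eq_mul]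
  ring

/-- The Fricke trace identity `tr [A, B] = (tr A)² + (tr B)² + (tr AB⁻¹)² - tr A tr B tr AB⁻¹ - 2`,
with `tr = 2 Re`, homogenized by the norms. -/
theorem re_mul_mul_star_mul_star :
    (a * b * star a * star b).re =
      2 * (normSq b * a.re ^ 2 + normSq a * b.re ^ 2 + (a * star b).re ^ 2
        - 2 * a.re * b.re * (a * star b).re) - normSq a * normSq b := by
  have swap_mul_star : b * star a = ↑(2 * (a * star b).re) - a * star b := by
    rw [← star_eq_two_re_sub, star_mul, star_star]
  have expand_commutator : a * b * star a * star b =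
      (2 * (a * star b).re) • (a * star b) - a * a * (star b * star b) :=
    calc
      a * b * star a * star b = a * (b * star a) * star b := by rw [mul_assoc a b]
      _ = (2 * (a * star b).re) • (a * star b) - a * a * (star b * star b) := by
        rw [swap_mul_star, mul_sub, sub_mul, mul_coe_eq_smul, smul_mul_assoc]
        simp only [mul_assoc]
  rw [expand_commutator, re_sub, re_smul, smul_eq_mul, re_mul_self_mul_star_mul_star]
  ring

theorem normSq_mul_sub_mul_comm :
    normSq (a * b - b * a) =
      2 * (normSq a * normSq b - (a * b * star a * star b).re) := by
  rw [sub_eq_add_neg, normSq_add, normSq_neg, star_neg, star_mul, mul_neg, re_neg, map_mul,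
    map_mul, ← mul_assoc]
  ring

theorem normSq_mul_sub_mul_comm_eq_four_mul :
    normSq (a * b - b * a) =
      4 * (normSq a * normSq b -
        (normSq b * a.re ^ 2 + normSq a * b.re ^ 2 + (a * star b).re ^ 2
          - 2 * a.re * b.re * (a * star b).re)) := by
  rw [normSq_mul_sub_mul_comm, re_mul_mul_star_mul_star]
  ring

end CommRing

theorem commute_iff_pillowcase_general {R : Type*} [CommRing R] [LinearOrder R]
    [IsStrictOrderedRing R] (a b : ℍ[R]) :
    a * b = b * a ↔
      normSq b * a.re ^ 2 + normSq a * b.re ^ 2 + (a * star b).re ^ 2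
        - 2 * a.re * b.re * (a * star b).re = normSq a * normSq b := by
  rw [← sub_eq_zero, ← normSq_eq_zero, normSq_mul_sub_mul_comm_eq_four_mul,
    mul_eq_zero_iff_left four_ne_zero, sub_eq_zero, eq_comm]

/-- For unit quaternions `a, b` with `x = Re a`, `y = Re b`, `z = Re(a·star b)`:
`a` and `b` commute iff `x² + y² + z² − 2xyz = 1`; i.e. the abelian locus of the character
variety of the rank two free group corresponds exactly to the pillowcase. -/
theorem commute_iff_pillowcase (a b : Quaternion ℝ) (ha : ‖a‖ = 1) (hb : ‖b‖ = 1) :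
    a * b = b * a ↔
      a.re ^ 2 + b.re ^ 2 + (a * star b).re ^ 2
        - 2 * a.re * b.re * (a * star b).re = 1 := by
  simpa only [normSq_eq_norm_mul_self, ha, hb, one_mul] using commute_iff_pillowcase_general a b
end

section
/- The set of real numbers of the form Re(a·b·a⁻¹·b⁻¹), as a and b range over all unit quaternions, is exactly the closed interval [−1, 1]. -/
/-!
A commutator of unit quaternions is again a unit quaternion, so its real part lies in `[-1, 1]`.
Conversely, if `u` and `p` are orthogonal imaginary quaternions with `u ≠ 0`, then they
anticommute, so conjugation by `u` sends `exp p` to `exp (-p)` and the commutator of `u` and `exp p`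
is `exp (-2p)`, with real part `cos (2‖p‖)`. Every point of `[-1, 1]` is such a cosine.
-/

open NormedSpace
open scoped Quaternion RealInnerProductSpace

theorem commutator_exp_of_semiconjBy_neg {𝔸 : Type*} [NormedDivisionRing 𝔸] [NormedAlgebra ℚ 𝔸]
    [CompleteSpace 𝔸] {u p : 𝔸} (hu : u ≠ 0) (h : SemiconjBy u p (-p)) :
    u * exp p * u⁻¹ * (exp p)⁻¹ = exp (-(2 • p)) := by
  have conj_exp : u * exp p * u⁻¹ = exp (-p) := by
    rw [h.exp_right.eq, mul_inv_cancel_right₀ hu]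
  rw [conj_exp, ← exp_neg, ← smul_neg, exp_nsmul, sq]

theorem quaternion_abs_re_le_norm (q : ℍ[ℝ]) : |q.re| ≤ ‖q‖ := by
  simpa [Quaternion.inner_def] using abs_real_inner_le_norm q 1

theorem quaternion_re_exp_of_re_eq_zero {q : ℍ[ℝ]} (hq : q.re = 0) : (exp q).re = Real.cos ‖q‖ := by
  simp [Quaternion.re_exp, hq]

theorem quaternion_norm_eq_one_iff_sum_sq_eq_one {q : ℍ[ℝ]} :
    ‖q‖ = 1 ↔ q.re ^ 2 + q.imI ^ 2 + q.imJ ^ 2 + q.imK ^ 2 = 1 := by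
  rw [← Quaternion.normSq_def', Quaternion.normSq_eq_norm_mul_self, ← sq,
    pow_eq_one_iff_of_nonneg (norm_nonneg q) two_ne_zero]

theorem quaternion_inner_eq_sum_mul (p q : ℍ[ℝ]) :
    ⟪p, q⟫ = p.re * q.re + p.imI * q.imI + p.imJ * q.imJ + p.imK * q.imK := by
  simp [Quaternion.inner_def]

theorem quaternion_semiconjBy_neg_of_inner_eq_zero {u p : ℍ[ℝ]} (hu : u.re = 0) (hp : p.re = 0)
    (h : ⟪u, p⟫ = 0) : SemiconjBy u p (-p) := by
  have dot_eq_zero : u.imI * p.imI + u.imJ * p.imJ + u.imK * p.imK = 0 := by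
    simpa [quaternion_inner_eq_sum_mul, hu, hp] using h
  ext <;> simp [hu, hp] <;> linarith

theorem quaternion_re_commutator_exp_of_inner_eq_zero {u p : ℍ[ℝ]} (hu₀ : u ≠ 0) (hu : u.re = 0)
    (hp : p.re = 0) (h : ⟪u, p⟫ = 0) :
    (u * exp p * u⁻¹ * (exp p)⁻¹).re = Real.cos (2 * ‖p‖) := by
  let +nondep : NormedAlgebra ℚ ℍ[ℝ] := .restrictScalars ℚ ℝ ℍ[ℝ]
  have re_eq_zero : (-(2 • p)).re = 0 := by
    rw [Quaternion.re_neg, Quaternion.re_smul, hp, smul_zero, neg_zero]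
  have norm_eq : ‖-(2 • p)‖ = 2 * ‖p‖ := by
    rw [norm_neg, RCLike.norm_nsmul ℝ, nsmul_eq_mul, Nat.cast_ofNat]
  rw [commutator_exp_of_semiconjBy_neg hu₀
      (quaternion_semiconjBy_neg_of_inner_eq_zero hu hp h),
    quaternion_re_exp_of_re_eq_zero re_eq_zero, norm_eq]

theorem exists_orthonormal_imaginary_quaternion_pair :
    ∃ i j : ℍ[ℝ], i.re = 0 ∧ j.re = 0 ∧ ‖i‖ = 1 ∧ ‖j‖ = 1 ∧ ⟪i, j⟫ = 0 := by
  refine ⟨⟨0, 1, 0, 0⟩, ⟨0, 0, 1, 0⟩, rfl, rfl, ?_, ?_, ?_⟩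
  · exact quaternion_norm_eq_one_iff_sum_sq_eq_one.mpr (by simp)
  · exact quaternion_norm_eq_one_iff_sum_sq_eq_one.mpr (by simp)
  · exact (quaternion_inner_eq_sum_mul _ _).trans (by simp)

/-- The set of values of `Re(aba⁻¹b⁻¹)` over pairs of unit quaternions `a, b` is exactly
the closed interval `[−1,1]`; i.e. the character `κ` of the commutator maps the character
variety of the rank two free group onto `[−1,1]`. -/
theorem range_re_commutator :
    {t : ℝ | ∃ a b : Quaternion ℝ, ‖a‖ = 1 ∧ ‖b‖ = 1 ∧ (a * b * a⁻¹ * b⁻¹).re = t} =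
      Set.Icc (-1) 1 := by
  refine Set.Subset.antisymm ?_ fun t ⟨ht₁, ht₂⟩ ↦ ?_
  · rintro _ ⟨a, b, ha, hb, rfl⟩
    have norm_commutator : ‖a * b * a⁻¹ * b⁻¹‖ = 1 := by simp [ha, hb]
    exact abs_le.mp ((quaternion_abs_re_le_norm _).trans_eq norm_commutator)
  · obtain ⟨i, j, hi, hj, norm_i, norm_j, hij⟩ := exists_orthonormal_imaginary_quaternion_pair
    let p : ℍ[ℝ] := (Real.arccos t / 2) • j
    have hp : p.re = 0 := by simp [p, hj]
    have hip : ⟪i, p⟫ = 0 := by simp [p, inner_smul_right, hij]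
    have two_mul_norm_p : 2 * ‖p‖ = Real.arccos t := by
      simp [p, norm_smul, norm_j, abs_of_nonneg (Real.arccos_nonneg t), mul_div_cancel₀]
    have hi₀ : i ≠ 0 := norm_ne_zero_iff.mp (by simp [norm_i])
    refine ⟨i, exp p, norm_i, by simp [hp], ?_⟩
    rw [quaternion_re_commutator_exp_of_inner_eq_zero hi₀ hi hp hip, two_mul_norm_p,
      Real.cos_arccos ht₁ ht₂]
end

section
/- For unit quaternions r, s, the commutator satisfies r·s·r⁻¹·s⁻¹ = −1 if and only if Re(r) = 0, Re(s) = 0, and Re(r·star s) = 0. -/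
/-!
The commutator of `r` and `s` is `-1` iff they anticommute. In that case `s * r * s⁻¹ = -r`, and
conjugation in the group preserves real parts, so `r`, and symmetrically `s`, is traceless. For
traceless `r` and `s` one has `star r = -r` and `star s = -s`, so `r * s + s * r` is the negative
of the polarized norm `r * star s + s * star r`, which is the scalar `2 * Re (r * star s)`.
-/

theorem mul_mul_inv_mul_inv_eq_neg_one_iff₀ {G : Type*} [GroupWithZero G] [HasDistribNeg G]
    {a b : G} (ha : a ≠ 0) (hb : b ≠ 0) : a * b * a⁻¹ * b⁻¹ = -1 ↔ a * b = -(b * a) := by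
  rw [mul_inv_eq_iff_eq_mul₀ hb, mul_inv_eq_iff_eq_mul₀ ha, neg_one_mul, neg_mul]

section Quaternion

open scoped Quaternion

variable {R : Type*}

section CommRing

variable [CommRing R]

theorem quaternion_re_mul_comm (a b : ℍ[R]) : (a * b).re = (b * a).re := by
  simp only [Quaternion.re_mul]
  ring

theorem quaternion_re_mul_mul_star (a b : ℍ[R]) :
    (a * b * star a).re = Quaternion.normSq a * b.re := by
  rw [quaternion_re_mul_comm, ← mul_assoc, Quaternion.star_mul_self, Quaternion.coe_mul_eq_smul,
    Quaternion.re_smul, smul_eq_mul]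

theorem quaternion_mul_star_add_mul_star (a b : ℍ[R]) :
    a * star b + b * star a = ↑(2 * (a * star b).re) := by
  simpa only [star_mul, star_star] using Quaternion.self_add_star' (a * star b)

variable [NoZeroDivisors R] [CharZero R] {a b : ℍ[R]}

theorem quaternion_re_eq_zero_of_mul_eq_neg_mul (hb : Quaternion.normSq b ≠ 0)
    (h : a * b = -(b * a)) : a.re = 0 := by
  have normSq_mul_re : Quaternion.normSq b * a.re = -(Quaternion.normSq b * a.re) :=
    calc Quaternion.normSq b * a.re
      _ = (b * a * star b).re := (quaternion_re_mul_mul_star b a).symm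
      _ = -(a * b * star b).re := by rw [h, neg_mul, Quaternion.re_neg, neg_neg]
      _ = -(Quaternion.normSq b * a.re) := by
        rw [mul_assoc, Quaternion.self_mul_star, Quaternion.mul_coe_eq_smul, Quaternion.re_smul,
          smul_eq_mul]
  exact (mul_eq_zero_iff_left hb).1 (self_eq_neg.1 normSq_mul_re)

theorem quaternion_mul_eq_neg_mul_iff_of_re_eq_zero (ha : a.re = 0) (hb : b.re = 0) :
    a * b = -(b * a) ↔ (a * star b).re = 0 := by
  have polarization : -(a * b + b * a) = ↑(2 * (a * star b).re) := by
    rw [← quaternion_mul_star_add_mul_star, Quaternion.star_eq_neg.2 ha,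
      Quaternion.star_eq_neg.2 hb, mul_neg, mul_neg, neg_add]
  rw [eq_neg_iff_add_eq_zero, ← neg_eq_zero, polarization, ← Quaternion.coe_zero,
    Quaternion.coe_inj, mul_eq_zero_iff_left two_ne_zero]

theorem quaternion_mul_eq_neg_mul_iff (ha : Quaternion.normSq a ≠ 0)
    (hb : Quaternion.normSq b ≠ 0) :
    a * b = -(b * a) ↔ a.re = 0 ∧ b.re = 0 ∧ (a * star b).re = 0 := by
  constructor
  · intro h
    have ha_re : a.re = 0 := quaternion_re_eq_zero_of_mul_eq_neg_mul hb h
    have hb_re : b.re = 0 :=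
      quaternion_re_eq_zero_of_mul_eq_neg_mul ha (neg_eq_iff_eq_neg.1 h.symm)
    exact ⟨ha_re, hb_re, (quaternion_mul_eq_neg_mul_iff_of_re_eq_zero ha_re hb_re).1 h⟩
  · rintro ⟨ha_re, hb_re, h⟩
    exact (quaternion_mul_eq_neg_mul_iff_of_re_eq_zero ha_re hb_re).2 h

end CommRing

theorem commutator_eq_neg_one_iff_general [Field R] [LinearOrder R] [IsStrictOrderedRing R]
    {r s : ℍ[R]} (hr : r ≠ 0) (hs : s ≠ 0) :
    r * s * r⁻¹ * s⁻¹ = -1 ↔ r.re = 0 ∧ s.re = 0 ∧ (r * star s).re = 0 := by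
  rw [mul_mul_inv_mul_inv_eq_neg_one_iff₀ hr hs]
  exact quaternion_mul_eq_neg_mul_iff (Quaternion.normSq_ne_zero.2 hr)
    (Quaternion.normSq_ne_zero.2 hs)

end Quaternion

/-- For unit quaternions `r, s`, the commutator `rsr⁻¹s⁻¹` equals `−1` iff
`Re(r) = 0`, `Re(s) = 0` and `Re(r·star s) = 0`. -/
theorem commutator_eq_neg_one_iff (r s : Quaternion ℝ) (hr : ‖r‖ = 1) (hs : ‖s‖ = 1) :
    r * s * r⁻¹ * s⁻¹ = -1 ↔ r.re = 0 ∧ s.re = 0 ∧ (r * star s).re = 0 :=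
  commutator_eq_neg_one_iff_general (ne_zero_of_norm_ne_zero (hr ▸ one_ne_zero))
    (ne_zero_of_norm_ne_zero (hs ▸ one_ne_zero))
end

section
/- Suppose R₋, S₋, R₊, S₊ are unit quaternions satisfying R₋S₋R₋⁻¹S₋⁻¹·R₊S₊R₊⁻¹S₊⁻¹ = 1. Let W = {Im(R₋), Im(star S₋ · star R₋), Im(S₊ · S₋), Im(star S₋ · R₊ · star S₊), Im(star R₊ · S₋)} ⊂ ℍ. Then the ℝ-linear span of W has dimension at most 1 if and only if R₋, S₋, R₊, S₊ pairwise commute (i.e., they generate an abelian subgroup of the unit quaternion group). -/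
/-! The commutator of two quaternions is twice the cross product of their imaginary parts, so two
quaternions commute exactly when their imaginary parts are parallel. Hence `W`, the set of imaginary
parts of five words, spans at most a line exactly when the words commute pairwise, that is, when
they lie in their own centralizer. This centralizer is also that of the four letters: a quaternion
commutes with `q` exactly when it commutes with `star q = 2 * q.re - q`, and the letters are
recovered from the words by cancelling invertible factors. -/

open Module Submodule Quaternion Matrix

section Centralizer

lemma commute_mul_right_iff_of_isRightRegular {S : Type*} [Semigroup S] {x a b : S}
    (hb : IsRightRegular b) (hxb : Commute x b) : Commute x (a * b) ↔ Commute x a := by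
  refine ⟨fun hxab ↦ hb ?_, fun hxa ↦ hxa.mul_right hxb⟩
  calc x * a * b = a * b * x := by rw [mul_assoc, hxab.eq]
    _ = a * x * b := by rw [mul_assoc, ← hxb.eq, mul_assoc]

lemma subset_centralizer_iff_of_centralizer_eq {M : Type*} [Mul M] {s t : Set M}
    (h : s.centralizer = t.centralizer) : s ⊆ s.centralizer ↔ t ⊆ t.centralizer := by
  have subset_centralizer_comm (u v : Set M) : u ⊆ v.centralizer ↔ v ⊆ u.centralizer :=
    ⟨fun huv b hb a ha ↦ (huv ha b hb).symm, fun hvu a ha b hb ↦ (hvu hb a ha).symm⟩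
  rw [h, subset_centralizer_comm, h]

end Centralizer

section LinearAlgebra

variable {K V : Type*} [DivisionRing K] [AddCommGroup V] [Module K V]

lemma finrank_span_le_one_iff_not_linearIndependent_pair {s : Set V}
    [Module.Finite K (span K s)] :
    finrank K (span K s) ≤ 1 ↔ ∀ x ∈ s, ∀ y ∈ s, ¬ LinearIndependent K ![x, y] := by
  constructor
  · intro hs x hx y hy hxy
    have hpair : span K (Set.range ![x, y]) ≤ span K s :=
      span_mono (by simp [Set.insert_subset_iff, hx, hy])
    have : 2 ≤ finrank K (span K s) := by
      simpa [finrank_span_eq_card hxy] using finrank_mono hpair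
    lia
  · intro hs
    by_cases! hzero : ∀ x ∈ s, x = 0
    · rw [span_eq_bot.2 hzero]
      simp only [finrank_bot, zero_le]
    · obtain ⟨x, hx, hx0⟩ := hzero
      have hline : span K s ≤ K ∙ x := span_le.2 fun y hy ↦ by
        simpa [LinearIndependent.pair_iff' hx0, mem_span_singleton] using hs x hx y hy
      exact (finrank_mono hline).trans_eq (finrank_span_singleton hx0)

end LinearAlgebra

section CommRing

variable {R : Type*} [CommRing R]

lemma commute_star_right_iff {x y : ℍ[R]} : Commute x (star y) ↔ Commute x y := by
  have star_of_commute (z : ℍ[R]) (hz : Commute x z) : Commute x (star z) := by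
    rw [star_eq_two_re_sub]
    exact (coe_commute _ x).symm.sub_right hz
  exact ⟨fun h ↦ star_star y ▸ star_of_commute _ h, star_of_commute y⟩

/-- The imaginary part of a quaternion as a coordinate vector, on which the cross product acts. -/
def imVec (x : ℍ[R]) : Fin 3 → R := ![x.imI, x.imJ, x.imK]

/-- The embedding of three-dimensional vectors as purely imaginary quaternions, which
transfers linear independence between the two; `imVec` is its left inverse. -/
def pureQuaternion : (Fin 3 → R) →ₗ[R] ℍ[R] where
  toFun v := ⟨0, v 0, v 1, v 2⟩
  map_add' _ _ := by ext; exacts [(add_zero 0).symm, rfl, rfl, rfl]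
  map_smul' c _ := by ext; exacts [(mul_zero c).symm, rfl, rfl, rfl]

lemma pureQuaternion_apply (v : Fin 3 → R) : pureQuaternion v = ⟨0, v 0, v 1, v 2⟩ := rfl

lemma pureQuaternion_injective : Function.Injective (pureQuaternion (R := R)) := by
  intro v w h
  ext i
  match i with
  | 0 => exact congrArg (·.imI) h
  | 1 => exact congrArg (·.imJ) h
  | 2 => exact congrArg (·.imK) h

lemma pureQuaternion_imVec (x : ℍ[R]) : pureQuaternion (imVec x) = x.im := rfl

lemma mul_sub_mul_comm_eq_pureQuaternion_cross (x y : ℍ[R]) :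
    x * y - y * x = pureQuaternion ((2 : R) • (imVec x ⨯₃ imVec y)) := by
  ext <;> simp [pureQuaternion_apply, imVec, cross_apply] <;> ring

lemma centralizer_words_eq {Rm Sm : ℍ[R]} (Rp Sp : ℍ[R]) (hRm : IsUnit Rm) (hSm : IsUnit Sm) :
    Set.centralizer {Rm, star Sm * star Rm, Sp * Sm, star Sm * Rp * star Sp, star Rp * Sm} =
      Set.centralizer {Rm, Sm, Rp, Sp} := by
  ext x
  simp only [Set.mem_centralizer_iff, Set.forall_mem_insert, Set.mem_singleton_iff, forall_eq,
    eq_comm (b := x * _), ← commute_iff_eq]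
  constructor
  · rintro ⟨hxRm, hxSmRm, hxSpSm, -, hxRpSm⟩
    have hxSm : Commute x Sm := commute_star_right_iff.1 <|
      (commute_mul_right_iff_of_isRightRegular hRm.star.isRegular.right
        (commute_star_right_iff.2 hxRm)).1 hxSmRm
    have cancel_Sm {q : ℍ[R]} : Commute x (q * Sm) ↔ Commute x q :=
      commute_mul_right_iff_of_isRightRegular hSm.isRegular.right hxSm
    exact ⟨hxRm, hxSm, commute_star_right_iff.1 (cancel_Sm.1 hxRpSm), cancel_Sm.1 hxSpSm⟩
  · rintro ⟨hxRm, hxSm, hxRp, hxSp⟩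
    have hxSm' : Commute x (star Sm) := commute_star_right_iff.2 hxSm
    exact ⟨hxRm, hxSm'.mul_right (commute_star_right_iff.2 hxRm), hxSp.mul_right hxSm,
      (hxSm'.mul_right hxRp).mul_right (commute_star_right_iff.2 hxSp),
      (commute_star_right_iff.2 hxRp).mul_right hxSm⟩

end CommRing

section Field

variable {F : Type*} [Field F] [NeZero (2 : F)]

lemma commute_iff_not_linearIndependent_im {x y : ℍ[F]} :
    Commute x y ↔ ¬ LinearIndependent F ![x.im, y.im] := by
  have hpair : ![x.im, y.im] = pureQuaternion ∘ ![imVec x, imVec y] := by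
    ext1 i
    fin_cases i
    exacts [(pureQuaternion_imVec x).symm, (pureQuaternion_imVec y).symm]
  rw [hpair, LinearMap.linearIndependent_iff (pureQuaternion (R := F))
      (LinearMap.ker_eq_bot.2 pureQuaternion_injective),
    ← crossProduct_ne_zero_iff_linearIndependent, not_not, commute_iff_eq, ← sub_eq_zero,
    mul_sub_mul_comm_eq_pureQuaternion_cross, map_eq_zero_iff _ pureQuaternion_injective,
    smul_eq_zero_iff_right two_ne_zero]

lemma finrank_span_im_image_le_one_iff {s : Set ℍ[F]} :
    finrank F (span F (im '' s)) ≤ 1 ↔ s ⊆ s.centralizer := by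
  simp only [finrank_span_le_one_iff_not_linearIndependent_pair, Set.forall_mem_image,
    ← commute_iff_not_linearIndependent_im]
  exact ⟨fun h x hx y hy ↦ h hy hx, fun h x hx y hy ↦ h hy x hx⟩

theorem span_W_dim_le_one_iff_abelian_general (Rm Sm Rp Sp : ℍ[F])
    (hRm : IsUnit Rm) (hSm : IsUnit Sm) :
    finrank F (span F
      ({Rm.im, (star Sm * star Rm).im, (Sp * Sm).im,
        (star Sm * Rp * star Sp).im, (star Rp * Sm).im} : Set ℍ[F])) ≤ 1 ↔
      (Rm * Sm = Sm * Rm ∧ Rm * Rp = Rp * Rm ∧ Rm * Sp = Sp * Rm ∧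
       Sm * Rp = Rp * Sm ∧ Sm * Sp = Sp * Sm ∧ Rp * Sp = Sp * Rp) := by
  rw [← Set.image_singleton, ← Set.image_insert_eq, ← Set.image_insert_eq, ← Set.image_insert_eq,
    ← Set.image_insert_eq, finrank_span_im_image_le_one_iff,
    subset_centralizer_iff_of_centralizer_eq (centralizer_words_eq Rp Sp hRm hSm)]
  simp only [Set.insert_subset_iff, Set.singleton_subset_iff, Set.mem_centralizer_iff,
    Set.forall_mem_insert, Set.mem_singleton_iff, forall_eq]
  grind

end Field

/-- If unit quaternions `R₋, S₋, R₊, S₊` satisfy the genus two relation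
`[R₋,S₋][R₊,S₊] = 1`, then the real span of
`W = {Im R₋, Im(S̄₋R̄₋), Im(S₊S₋), Im(S̄₋R₊S̄₊), Im(R̄₊S₋)}` has dimension at most 1
if and only if `R₋, S₋, R₊, S₊` pairwise commute (generate an abelian subgroup). -/
theorem span_W_dim_le_one_iff_abelian (Rm Sm Rp Sp : Quaternion ℝ)
    (hRm : ‖Rm‖ = 1) (hSm : ‖Sm‖ = 1) (hRp : ‖Rp‖ = 1) (hSp : ‖Sp‖ = 1)
    (hrel : Rm * Sm * Rm⁻¹ * Sm⁻¹ * (Rp * Sp * Rp⁻¹ * Sp⁻¹) = 1) :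
    Module.finrank ℝ (Submodule.span ℝ
      ({Rm.im, (star Sm * star Rm).im, (Sp * Sm).im,
        (star Sm * Rp * star Sp).im, (star Rp * Sm).im} : Set (Quaternion ℝ))) ≤ 1 ↔
      (Rm * Sm = Sm * Rm ∧ Rm * Rp = Rp * Rm ∧ Rm * Sp = Sp * Rm ∧
       Sm * Rp = Rp * Sm ∧ Sm * Sp = Sp * Sm ∧ Rp * Sp = Sp * Rp) :=
  span_W_dim_le_one_iff_abelian_general Rm Sm Rp Sp (norm_ne_zero_iff.1 (by simp [hRm])).isUnit
    (norm_ne_zero_iff.1 (by simp [hSm])).isUnit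
end

section
/- Let i, k ∈ ℍ be standard quaternion units. Suppose R₋, S₋, R₊, S₊ are unit quaternions with R₋·S₋ = S₋·R₋ and R₊·S₊ = S₊·R₊. Then there exist a unit quaternion u, real numbers α₋, β₋, α₊, β₊, and γ ∈ [0, π] such that u·R₋·u⁻¹ = exp(α₋·i), u·S₋·u⁻¹ = exp(β₋·i), u·R₊·u⁻¹ = exp((γ/2)·k)·exp(α₊·i)·exp(−(γ/2)·k), and u·S₊·u⁻¹ = exp((γ/2)·k)·exp(β₊·i)·exp(−(γ/2)·k). (This is the surjectivity of the parameterization Ψ of the level set κ⁻¹(1) of the genus two character variety.) -/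
noncomputable section

/-- The standard quaternion unit `i`. -/
def qi : Quaternion ℝ := ⟨0, 1, 0, 0⟩

/-- The standard quaternion unit `k`. -/
def qk : Quaternion ℝ := ⟨0, 0, 0, 1⟩

/-- `exp(θ·p) = cos θ + (sin θ)·p` for a purely imaginary unit quaternion `p`. -/
def qexp (θ : ℝ) (p : Quaternion ℝ) : Quaternion ℝ :=
  ((Real.cos θ : ℝ) : Quaternion ℝ) + Real.sin θ • p

/-!
Two commuting quaternions can be conjugated simultaneously into the maximal torus `ℂ = ℝ + ℝi`; let
`u₋`, `u₊` do this for the pairs `(R₋, S₋)` and `(R₊, S₊)`. Euler angles factor the transition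
element as `u₋ u₊⁻¹ = exp(ai) exp((γ/2)k) exp(bi)` with `γ ∈ [0, π]`, so the single unit quaternion
`u = exp(−ai) u₋ = exp((γ/2)k) exp(bi) u₊` puts both pairs in the required form: the torus
factors `exp(−ai)` and `exp(bi)` commute with the conjugated pairs.
-/

lemma norm_coeComplex (z : ℂ) : ‖(z : Quaternion ℝ)‖ = ‖z‖ := by
  rw [← sq_eq_sq₀ (norm_nonneg _) (norm_nonneg _), sq, ← Quaternion.normSq_eq_norm_mul_self,
    Quaternion.normSq_def', ← Complex.normSq_eq_norm_sq, Complex.normSq_apply]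
  simp [sq]

lemma exists_coeComplex_eq_iff {q : Quaternion ℝ} :
    (∃ z : ℂ, (z : Quaternion ℝ) = q) ↔ q.imJ = 0 ∧ q.imK = 0 := by
  constructor
  · rintro ⟨z, rfl⟩
    exact ⟨rfl, rfl⟩
  · rintro ⟨hJ, hK⟩
    exact ⟨⟨q.re, q.imI⟩, by ext <;> simp [hJ, hK]⟩

lemma exists_coeComplex_eq_of_commute {z : ℂ} (hz : z.im ≠ 0) {q : Quaternion ℝ}
    (h : Commute (z : Quaternion ℝ) q) : ∃ w : ℂ, (w : Quaternion ℝ) = q := by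
  have hJ := congrArg QuaternionAlgebra.imJ h.eq
  have hK := congrArg QuaternionAlgebra.imK h.eq
  simp only [Quaternion.imJ_mul, Quaternion.imK_mul, Quaternion.re_coeComplex,
    Quaternion.imI_coeComplex, Quaternion.imJ_coeComplex, Quaternion.imK_coeComplex] at hJ hK
  refine exists_coeComplex_eq_iff.2 ⟨?_, ?_⟩ <;> apply mul_left_cancel₀ hz <;> linarith

@[simp] lemma re_qk : qk.re = 0 := rfl

@[simp] lemma imI_qk : qk.imI = 0 := rfl

@[simp] lemma imJ_qk : qk.imJ = 0 := rfl

@[simp] lemma imK_qk : qk.imK = 1 := rfl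

lemma qi_eq_coeComplex : qi = (Complex.I : Quaternion ℝ) := rfl

lemma qi_mul_self : qi * qi = -1 := by
  ext <;> simp [qi_eq_coeComplex, Quaternion.re_one, Quaternion.imI_one, Quaternion.imJ_one,
    Quaternion.imK_one]

lemma qk_mul_self : qk * qk = -1 := by
  ext <;> simp [Quaternion.re_one, Quaternion.imI_one, Quaternion.imJ_one, Quaternion.imK_one]

lemma qk_mul_coeComplex (z : ℂ) :
    qk * (z : Quaternion ℝ) = (starRingEnd ℂ z : Quaternion ℝ) * qk := by
  ext <;> simp

lemma eq_coeComplex_add_coeComplex_mul_qk (q : Quaternion ℝ) :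
    q = ((⟨q.re, q.imI⟩ : ℂ) : Quaternion ℝ) + ((⟨q.imK, -q.imJ⟩ : ℂ) : Quaternion ℝ) * qk := by
  ext <;> simp

lemma qexp_qi_eq_coeComplex_exp (θ : ℝ) : qexp θ qi = (Complex.exp (θ * Complex.I) : ℂ) := by
  ext <;> simp [qexp, qi_eq_coeComplex, Complex.exp_ofReal_mul_I_re, Complex.exp_ofReal_mul_I_im]

lemma norm_qexp_qi (θ : ℝ) : ‖qexp θ qi‖ = 1 := by
  rw [qexp_qi_eq_coeComplex_exp, norm_coeComplex, Complex.norm_exp_ofReal_mul_I]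

lemma qexp_qi_ne_zero (θ : ℝ) : qexp θ qi ≠ 0 :=
  norm_ne_zero_iff.1 ((norm_qexp_qi θ).symm ▸ one_ne_zero)

lemma qexp_add_qi (θ φ : ℝ) : qexp (θ + φ) qi = qexp θ qi * qexp φ qi := by
  rw [qexp_qi_eq_coeComplex_exp, qexp_qi_eq_coeComplex_exp, qexp_qi_eq_coeComplex_exp,
    ← Quaternion.coeComplex_mul, ← Complex.exp_add, Complex.ofReal_add, add_mul]

lemma qexp_qi_conj_smul_qexp_qi (θ φ r : ℝ) :
    qexp θ qi * (r • qexp φ qi) * (qexp θ qi)⁻¹ = r • qexp φ qi := by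
  rw [mul_inv_eq_iff_eq_mul₀ (qexp_qi_ne_zero θ), mul_smul_comm, smul_mul_assoc, ← qexp_add_qi,
    ← qexp_add_qi, add_comm]

lemma coeComplex_eq_norm_smul_qexp (z : ℂ) : (z : Quaternion ℝ) = ‖z‖ • qexp z.arg qi := by
  conv_lhs => rw [← Complex.norm_mul_exp_arg_mul_I z]
  rw [qexp_qi_eq_coeComplex_exp, Quaternion.coeComplex_mul, Quaternion.coeComplex_coe,
    Quaternion.coe_mul_eq_smul]

lemma commute_conj₀ {G₀ : Type*} [GroupWithZero G₀] {u a b : G₀} (hu : u ≠ 0)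
    (h : Commute a b) : Commute (u * a * u⁻¹) (u * b * u⁻¹) := by
  simp only [Commute, SemiconjBy, mul_assoc, inv_mul_cancel_left₀ hu, h.left_comm]

lemma mul_conj_mul_inv {G : Type*} [DivisionMonoid G] (v u q : G) :
    v * u * q * (v * u)⁻¹ = v * (u * q * u⁻¹) * v⁻¹ := by
  simp only [mul_inv_rev, mul_assoc]

lemma exists_norm_eq_one_conj_eq {D : Type*} [NormedDivisionRing D] [NormedAlgebra ℝ D]
    {w q r : D} (hw : w ≠ 0) (h : w * q = r * w) : ∃ u : D, ‖u‖ = 1 ∧ u * q * u⁻¹ = r := by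
  refine ⟨(‖w‖⁻¹ : ℝ) • w, norm_smul_inv_norm (𝕜 := ℝ) hw, ?_⟩
  rw [mul_inv_eq_iff_eq_mul₀ (smul_ne_zero (inv_ne_zero (norm_ne_zero_iff.2 hw)) hw),
    smul_mul_assoc, mul_smul_comm, h]

-- With `v = q.im` and `n = ‖v‖`, `v² = -n²` gives `(n - iv)v = n(v + ni) = (ni)(n - iv)`.
lemma norm_im_sub_qi_mul_im_mul (q : Quaternion ℝ) :
    (‖q.im‖ - qi * q.im) * q =
      ((q.re + ‖q.im‖ * Complex.I : ℂ) : Quaternion ℝ) * (‖q.im‖ - qi * q.im) := by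
  set n := ‖q.im‖
  have hv : q.im * q.im = -(n * n : Quaternion ℝ) := by
    rw [← sq, Quaternion.im_sq, Quaternion.normSq_eq_norm_mul_self, Quaternion.coe_mul]
  have hqi : qi * n = n * qi := (Quaternion.coe_commutes n qi).symm
  have him : (n - qi * q.im) * q.im = n * qi * (n - qi * q.im) := by
    calc (n - qi * q.im) * q.im = n * q.im - qi * (q.im * q.im) := by rw [sub_mul, mul_assoc]
      _ = n * (q.im + n * qi) := by
        rw [hv, mul_neg, sub_neg_eq_add, ← mul_assoc, hqi, mul_assoc, hqi, mul_add]
      _ = n * (qi * n - qi * qi * q.im) := by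
        rw [qi_mul_self, neg_one_mul, sub_neg_eq_add, hqi, add_comm]
      _ = n * qi * (n - qi * q.im) := by simp only [mul_sub, mul_assoc]
  rw [Quaternion.coeComplex_add, Quaternion.coeComplex_mul, Quaternion.coeComplex_coe,
    Quaternion.coeComplex_coe, ← qi_eq_coeComplex, add_mul, ← him, Quaternion.coe_commutes,
    ← mul_add, Quaternion.re_add_im]

lemma exists_norm_eq_one_conj_eq_coeComplex (q : Quaternion ℝ) :
    ∃ (u : Quaternion ℝ) (z : ℂ), ‖u‖ = 1 ∧ u * q * u⁻¹ = z := by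
  by_cases hq : ∃ z : ℂ, (z : Quaternion ℝ) = q
  · obtain ⟨z, rfl⟩ := hq
    exact ⟨1, z, norm_one, by simp⟩
  · have hne : (‖q.im‖ : Quaternion ℝ) - qi * q.im ≠ 0 := by
      rw [sub_ne_zero, qi_eq_coeComplex]
      intro h
      have hJ := congrArg QuaternionAlgebra.imJ h
      have hK := congrArg QuaternionAlgebra.imK h
      refine hq (exists_coeComplex_eq_iff.2 ⟨?_, ?_⟩)
      · simpa using hK.symm
      · simpa using hJ
    obtain ⟨u, hu, huq⟩ := exists_norm_eq_one_conj_eq hne (norm_im_sub_qi_mul_im_mul q)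
    exact ⟨u, _, hu, huq⟩

lemma exists_conj_eq_coeComplex_of_commute {R S : Quaternion ℝ} (h : Commute R S) :
    ∃ (u : Quaternion ℝ) (z w : ℂ), ‖u‖ = 1 ∧ u * R * u⁻¹ = z ∧ u * S * u⁻¹ = w := by
  obtain ⟨u, z, hu, hR⟩ := exists_norm_eq_one_conj_eq_coeComplex R
  have hu0 : u ≠ 0 := norm_ne_zero_iff.1 (hu ▸ one_ne_zero)
  by_cases hz : z.im = 0
  · have hRz : R = (z.re : Quaternion ℝ) := by
      rw [← Complex.conj_eq_iff_im, Complex.conj_eq_iff_re] at hz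
      rw [← hz, Quaternion.coeComplex_coe, mul_inv_eq_iff_eq_mul₀ hu0,
        Quaternion.coe_commutes] at hR
      exact mul_left_cancel₀ hu0 hR
    obtain ⟨v, w, hv, hS⟩ := exists_norm_eq_one_conj_eq_coeComplex S
    refine ⟨v, z.re, w, hv, ?_, hS⟩
    rw [hRz, Quaternion.coeComplex_coe,
      mul_inv_eq_iff_eq_mul₀ (norm_ne_zero_iff.1 (hv ▸ one_ne_zero)), Quaternion.coe_commutes]
  · have hcomm : Commute (z : Quaternion ℝ) (u * S * u⁻¹) := by
      rw [← hR]
      exact commute_conj₀ hu0 h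
    obtain ⟨w, hw⟩ := exists_coeComplex_eq_of_commute hz hcomm
    exact ⟨u, z, w, hu, hR, hw.symm⟩

lemma exists_conj_eq_norm_smul_qexp_of_commute {R S : Quaternion ℝ} (h : Commute R S) :
    ∃ (u : Quaternion ℝ) (α β : ℝ), ‖u‖ = 1 ∧
      u * R * u⁻¹ = ‖R‖ • qexp α qi ∧ u * S * u⁻¹ = ‖S‖ • qexp β qi := by
  obtain ⟨u, z, w, hu, hR, hS⟩ := exists_conj_eq_coeComplex_of_commute h
  have norm_eq {q : Quaternion ℝ} {z : ℂ} (hq : u * q * u⁻¹ = z) : ‖z‖ = ‖q‖ := by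
    simpa [hu, norm_coeComplex] using (congrArg norm hq).symm
  refine ⟨u, z.arg, w.arg, hu, ?_, ?_⟩
  · rw [hR, coeComplex_eq_norm_smul_qexp, norm_eq hR]
  · rw [hS, coeComplex_eq_norm_smul_qexp, norm_eq hS]

lemma inv_qexp {p : Quaternion ℝ} (hp : p * p = -1) (θ : ℝ) : (qexp θ p)⁻¹ = qexp (-θ) p := by
  have hcomm : Commute (Real.cos θ : Quaternion ℝ) (Real.sin θ • p) :=
    Quaternion.coe_commute _ _
  refine inv_eq_of_mul_eq_one_right ?_
  calc qexp θ p * qexp (-θ) p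
      = (Real.cos θ + Real.sin θ • p) * (Real.cos θ - Real.sin θ • p) := by
        simp only [qexp, Real.cos_neg, Real.sin_neg, neg_smul, sub_eq_add_neg]
    _ = ((Real.cos θ ^ 2 + Real.sin θ ^ 2 : ℝ) : Quaternion ℝ) := by
        rw [← hcomm.mul_self_sub_mul_self_eq, smul_mul_smul_comm, hp, smul_neg, sub_neg_eq_add,
          ← Quaternion.coe_mul, ← Quaternion.coe_one, Quaternion.smul_coe, mul_one,
          ← Quaternion.coe_add, sq, sq]
    _ = 1 := by rw [Real.cos_sq_add_sin_sq, Quaternion.coe_one]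

lemma qexp_qi_mul_qexp_qk_mul_qexp_qi (a θ b : ℝ) :
    qexp a qi * qexp θ qk * qexp b qi =
      Real.cos θ • qexp (a + b) qi + Real.sin θ • (qexp (a - b) qi * qk) := by
  have hk : qk * qexp b qi = qexp (-b) qi * qk := by
    rw [qexp_qi_eq_coeComplex_exp, qexp_qi_eq_coeComplex_exp, qk_mul_coeComplex, ← Complex.exp_conj]
    simp
  rw [qexp.eq_def θ, mul_add, add_mul, ← Quaternion.coe_commutes, mul_assoc, ← qexp_add_qi,
    mul_smul_comm, smul_mul_assoc, mul_assoc _ qk, hk, ← mul_assoc, ← qexp_add_qi,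
    Quaternion.coe_mul_eq_smul, sub_eq_add_neg]

lemma exists_euler_angles {g : Quaternion ℝ} (hg : ‖g‖ = 1) :
    ∃ a γ b : ℝ, 0 ≤ γ ∧ γ ≤ Real.pi ∧ g = qexp a qi * qexp (γ / 2) qk * qexp b qi := by
  set z : ℂ := ⟨g.re, g.imI⟩
  set w : ℂ := ⟨g.imK, -g.imJ⟩
  have hzw : ‖z‖ ^ 2 + ‖w‖ ^ 2 = 1 := by
    rw [← Complex.normSq_eq_norm_sq, ← Complex.normSq_eq_norm_sq, Complex.normSq_mk,
      Complex.normSq_mk]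
    have hnorm : Quaternion.normSq g = 1 := by
      rw [Quaternion.normSq_eq_norm_mul_self, hg, one_mul]
    rw [Quaternion.normSq_def'] at hnorm
    linarith
  have hcos : Real.cos (Real.arccos ‖z‖) = ‖z‖ :=
    Real.cos_arccos (by linarith [norm_nonneg z]) (by nlinarith [sq_nonneg ‖w‖])
  have hsin : Real.sin (Real.arccos ‖z‖) = ‖w‖ := by
    rw [Real.sin_arccos, ← hzw, add_sub_cancel_left, Real.sqrt_sq (norm_nonneg w)]
  refine ⟨(z.arg + w.arg) / 2, 2 * Real.arccos ‖z‖, (z.arg - w.arg) / 2,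
    by linarith [Real.arccos_nonneg ‖z‖],
    by linarith [Real.arccos_le_pi_div_two.2 (norm_nonneg z)], ?_⟩
  calc g = z + w * qk := eq_coeComplex_add_coeComplex_mul_qk g
    _ = ‖z‖ • qexp z.arg qi + ‖w‖ • (qexp w.arg qi * qk) := by
      rw [coeComplex_eq_norm_smul_qexp z, coeComplex_eq_norm_smul_qexp w, smul_mul_assoc]
    _ = _ := by
      rw [mul_div_cancel_left₀ _ two_ne_zero, qexp_qi_mul_qexp_qk_mul_qexp_qi, hcos, hsin]
      ring_nf

theorem psi_surjective_general (Rm Sm Rp Sp : Quaternion ℝ)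
    (hcm : Rm * Sm = Sm * Rm) (hcp : Rp * Sp = Sp * Rp) :
    ∃ (u : Quaternion ℝ) (αm βm αp βp γ : ℝ), ‖u‖ = 1 ∧
      0 ≤ γ ∧ γ ≤ Real.pi ∧
      u * Rm * u⁻¹ = ‖Rm‖ • qexp αm qi ∧
      u * Sm * u⁻¹ = ‖Sm‖ • qexp βm qi ∧
      u * Rp * u⁻¹ = ‖Rp‖ • (qexp (γ / 2) qk * qexp αp qi * qexp (-(γ / 2)) qk) ∧
      u * Sp * u⁻¹ = ‖Sp‖ • (qexp (γ / 2) qk * qexp βp qi * qexp (-(γ / 2)) qk) := by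
  obtain ⟨um, αm, βm, hum, hRm, hSm⟩ := exists_conj_eq_norm_smul_qexp_of_commute hcm
  obtain ⟨up, αp, βp, hup, hRp, hSp⟩ := exists_conj_eq_norm_smul_qexp_of_commute hcp
  have hg : ‖um * up⁻¹‖ = 1 := by rw [norm_mul, norm_inv, hum, hup, inv_one, one_mul]
  obtain ⟨a, γ, b, hγ0, hγπ, hab⟩ := exists_euler_angles hg
  have hK : (qexp (γ / 2) qk)⁻¹ = qexp (-(γ / 2)) qk := inv_qexp qk_mul_self _
  have hu : qexp (-a) qi * um = qexp (γ / 2) qk * (qexp b qi * up) := by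
    rw [← inv_qexp qi_mul_self, inv_mul_eq_iff_eq_mul₀ (qexp_qi_ne_zero a), ← mul_assoc,
      ← mul_assoc, ← hab, inv_mul_cancel_right₀ (norm_ne_zero_iff.1 (hup ▸ one_ne_zero))]
  refine ⟨qexp (-a) qi * um, αm, βm, αp, βp, γ, ?_, hγ0, hγπ, ?_, ?_, ?_, ?_⟩
  · rw [norm_mul, norm_qexp_qi, hum, one_mul]
  · rw [mul_conj_mul_inv, hRm, qexp_qi_conj_smul_qexp_qi]
  · rw [mul_conj_mul_inv, hSm, qexp_qi_conj_smul_qexp_qi]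
  · rw [hu, mul_conj_mul_inv, mul_conj_mul_inv, hRp, qexp_qi_conj_smul_qexp_qi, hK, mul_smul_comm,
      smul_mul_assoc]
  · rw [hu, mul_conj_mul_inv, mul_conj_mul_inv, hSp, qexp_qi_conj_smul_qexp_qi, hK, mul_smul_comm,
      smul_mul_assoc]

/-- Surjectivity of the parameterization `Ψ` of the level set `κ⁻¹(1)` of the genus two
character variety: any quadruple of unit quaternions with `R₋S₋ = S₋R₋` and
`R₊S₊ = S₊R₊` is simultaneously conjugate to
`(exp(α₋i), exp(β₋i), exp((γ/2)k)exp(α₊i)exp(−(γ/2)k), exp((γ/2)k)exp(β₊i)exp(−(γ/2)k))`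
for some reals `α₋, β₋, α₊, β₊` and `γ ∈ [0,π]`. -/
theorem psi_surjective (Rm Sm Rp Sp : Quaternion ℝ)
    (hRm : ‖Rm‖ = 1) (hSm : ‖Sm‖ = 1) (hRp : ‖Rp‖ = 1) (hSp : ‖Sp‖ = 1)
    (hcm : Rm * Sm = Sm * Rm) (hcp : Rp * Sp = Sp * Rp) :
    ∃ (u : Quaternion ℝ) (αm βm αp βp γ : ℝ), ‖u‖ = 1 ∧
      0 ≤ γ ∧ γ ≤ Real.pi ∧
      u * Rm * u⁻¹ = qexp αm qi ∧
      u * Sm * u⁻¹ = qexp βm qi ∧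
      u * Rp * u⁻¹ = qexp (γ / 2) qk * qexp αp qi * qexp (-(γ / 2)) qk ∧
      u * Sp * u⁻¹ = qexp (γ / 2) qk * qexp βp qi * qexp (-(γ / 2)) qk := by
  simpa only [hRm, hSm, hRp, hSp, one_smul] using psi_surjective_general Rm Sm Rp Sp hcm hcp
end
end

section
/- Let Q be a 4×4 complex matrix that is Hermitian, satisfies conj(Q) = −Q (entrywise complex conjugation), and has det Q ≠ 0. Then there exist vectors v₁, v₂ ∈ ℂ⁴ and real numbers λ₁, λ₂ > 0 such that Q·v₁ = λ₁·v₁, Q·v₂ = λ₂·v₂, Q·(conj v₁) = −λ₁·(conj v₁), Q·(conj v₂) = −λ₂·(conj v₂), and the four nonzero vectors v₁, v₂, conj v₁, conj v₂ are pairwise orthogonal with respect to the standard Hermitian inner product on ℂ⁴ (hence form an orthogonal basis of ℂ⁴). -/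
open scoped ComplexConjugate

/-! Entrywise conjugation sends a `μ`-eigenvector of `Q` to a `(-conj μ)`-eigenvector, so negative
eigenvalues can be traded for positive ones. Among `2 k` nonzero eigenvalues some `k` have the same
sign, which yields `k` orthogonal eigenvectors with positive eigenvalues. Since `Q` is also
skew-symmetric, it is skew-adjoint for the bilinear form `v ⬝ᵥ w`, which therefore vanishes on
eigenvectors with positive eigenvalues: these are orthogonal to their conjugates. -/

open scoped Matrix

section Conjugation

variable {n R : Type*} [CommRing R] [StarRing R] {Q : Matrix n n R}

lemma transpose_eq_neg_of_isHermitian_of_map_conj_eq_neg (hherm : Q.IsHermitian)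
    (hconj : Q.map (starRingEnd R) = -Q) : Qᵀ = -Q := by
  rw [← hconj]
  exact congrArg Matrix.transpose hherm.eq.symm

variable [Fintype n]

lemma mulVec_star_of_map_conj_eq_neg (hconj : Q.map (starRingEnd R) = -Q) {v : n → R} {μ : R}
    (hv : Q *ᵥ v = μ • v) : Q *ᵥ star v = -star μ • star v := by
  have hstar : star (Q *ᵥ v) = -Q *ᵥ star v := by
    rw [← hconj]
    exact funext (RingHom.map_mulVec (starRingEnd R) Q v)
  rw [neg_smul, ← star_smul, ← hv, hstar, Matrix.neg_mulVec, neg_neg]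

lemma pairwise_star_dotProduct_sumElim_star {ι : Type*} {v : ι → n → R}
    (hstar : Pairwise fun i j => star (v i) ⬝ᵥ v j = 0) (hdot : ∀ i j, v i ⬝ᵥ v j = 0) :
    Pairwise fun a b => star (Sum.elim v (star v) a) ⬝ᵥ Sum.elim v (star v) b = 0 := by
  rintro (i | i) (j | j) hij
  · exact hstar (ne_of_apply_ne Sum.inl hij)
  · simp [Matrix.star_dotProduct_star, hdot]
  · simp [hdot]
  · simpa [dotProduct_comm] using hstar (ne_of_apply_ne Sum.inr hij.symm)

end Conjugation

lemma dotProduct_eq_zero_of_transpose_eq_neg {n R : Type*} [Fintype n] [CommRing R]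
    [NoZeroDivisors R] {Q : Matrix n n R} (hskew : Qᵀ = -Q) {v w : n → R} {μ ν : R}
    (hv : Q *ᵥ v = μ • v) (hw : Q *ᵥ w = ν • w) (hμν : μ + ν ≠ 0) : v ⬝ᵥ w = 0 := by
  have hadj : v ⬝ᵥ Q *ᵥ w = -(Q *ᵥ v ⬝ᵥ w) := by
    rw [Matrix.dotProduct_mulVec, ← Matrix.mulVec_transpose, hskew, Matrix.neg_mulVec,
      neg_dotProduct]
  have hmul : (μ + ν) * (v ⬝ᵥ w) = 0 := by
    simp only [hv, hw, dotProduct_smul, smul_dotProduct, smul_eq_mul] at hadj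
    linear_combination hadj
  exact (mul_eq_zero.mp hmul).resolve_left hμν

lemma exists_embedding_forall_pos_or_forall_neg {ι α : Type*} [Fintype ι] [Zero α] [LinearOrder α]
    {k : ℕ} (f : ι → α) (hk : 2 * k ≤ Fintype.card {i // f i ≠ 0}) :
    ∃ e : Fin k ↪ ι, (∀ i, 0 < f (e i)) ∨ ∀ i, f (e i) < 0 := by
  have embed (p : ι → Prop) [DecidablePred p] (hp : k ≤ Fintype.card {i // p i}) :
      ∃ e : Fin k ↪ ι, ∀ i, p (e i) := by
    obtain ⟨e⟩ := Function.Embedding.nonempty_of_card_le (α := Fin k) (β := {i // p i}) (by simpa)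
    exact ⟨e.trans (.subtype p), fun i => (e i).2⟩
  have hcard : Fintype.card {i // f i ≠ 0} ≤
      Fintype.card {i // 0 < f i} + Fintype.card {i // f i < 0} := by
    simp_rw [ne_iff_lt_or_gt, or_comm (a := f _ < 0)]
    exact Fintype.card_subtype_or _ _
  obtain hpos | hneg : k ≤ Fintype.card {i // 0 < f i} ∨ k ≤ Fintype.card {i // f i < 0} := by
    omega
  · exact (embed _ hpos).imp fun _ => Or.inl
  · exact (embed _ hneg).imp fun _ => Or.inr

section RCLike

variable {𝕜 n : Type*} [RCLike 𝕜] [Fintype n] {Q : Matrix n n 𝕜} {k : ℕ}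

lemma exists_orthogonal_eigenvectors_same_sign (hherm : Q.IsHermitian) (hk : 2 * k ≤ Q.rank) :
    ∃ (v : Fin k → n → 𝕜) (l : Fin k → ℝ), ((∀ i, 0 < l i) ∨ ∀ i, l i < 0) ∧
      (∀ i, v i ≠ 0) ∧ (∀ i, Q *ᵥ v i = (l i : 𝕜) • v i) ∧
      Pairwise fun i j => star (v i) ⬝ᵥ v j = 0 := by
  classical
  rw [hherm.rank_eq_card_non_zero_eigs] at hk
  obtain ⟨e, he⟩ := exists_embedding_forall_pos_or_forall_neg hherm.eigenvalues hk
  let b := hherm.eigenvectorBasis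
  refine ⟨fun i => b (e i), fun i => hherm.eigenvalues (e i), he, fun i => ?_, fun i => ?_,
    fun i j hij => ?_⟩
  · exact (WithLp.ofLp_eq_zero 2).not.mpr (b.orthonormal.ne_zero (e i))
  · rw [hherm.mulVec_eigenvectorBasis, RCLike.real_smul_eq_coe_smul (K := 𝕜)]
  · beta_reduce
    rw [dotProduct_comm, ← EuclideanSpace.inner_eq_star_dotProduct]
    exact b.orthonormal.2 (e.injective.ne hij)

lemma exists_orthogonal_eigenvectors_pos (hherm : Q.IsHermitian)
    (hconj : Q.map (starRingEnd 𝕜) = -Q) (hk : 2 * k ≤ Q.rank) :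
    ∃ (v : Fin k → n → 𝕜) (l : Fin k → ℝ), (∀ i, 0 < l i) ∧
      (∀ i, v i ≠ 0) ∧ (∀ i, Q *ᵥ v i = (l i : 𝕜) • v i) ∧
      Pairwise fun i j => star (v i) ⬝ᵥ v j = 0 := by
  obtain ⟨v, l, hpos | hneg, hne, heig, horth⟩ := exists_orthogonal_eigenvectors_same_sign hherm hk
  · exact ⟨v, l, hpos, hne, heig, horth⟩
  · refine ⟨star v, -l, fun i => neg_pos.mpr (hneg i), fun i => star_ne_zero.mpr (hne i),
      fun i => ?_, fun i j hij => ?_⟩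
    · simpa using mulVec_star_of_map_conj_eq_neg hconj (heig i)
    · simpa [dotProduct_comm] using horth hij.symm

theorem hermitian_anticonj_eigenbasis_general (hherm : Q.IsHermitian)
    (hconj : Q.map (starRingEnd 𝕜) = -Q) (hk : 2 * k ≤ Q.rank) :
    ∃ (v : Fin k → n → 𝕜) (l : Fin k → ℝ), (∀ i, 0 < l i) ∧ (∀ i, v i ≠ 0) ∧
      (∀ i, Q *ᵥ v i = (l i : 𝕜) • v i) ∧
      (∀ i, Q *ᵥ star (v i) = -(l i : 𝕜) • star (v i)) ∧
      Pairwise fun a b => star (Sum.elim v (star v) a) ⬝ᵥ Sum.elim v (star v) b = 0 := by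
  obtain ⟨v, l, hpos, hne, heig, horth⟩ := exists_orthogonal_eigenvectors_pos hherm hconj hk
  have hskew := transpose_eq_neg_of_isHermitian_of_map_conj_eq_neg hherm hconj
  have hdot (i j : Fin k) : v i ⬝ᵥ v j = 0 :=
    dotProduct_eq_zero_of_transpose_eq_neg hskew (heig i) (heig j)
      (mod_cast (add_pos (hpos i) (hpos j)).ne')
  refine ⟨v, l, hpos, hne, heig, fun i => ?_, pairwise_star_dotProduct_sumElim_star horth hdot⟩
  simpa using mulVec_star_of_map_conj_eq_neg hconj (heig i)

end RCLike

/-- If a 4×4 complex matrix `Q` is Hermitian, satisfies `conj Q = −Q` (entrywise complex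
conjugation) and has nonzero determinant, then there are vectors `v₁, v₂ ∈ ℂ⁴` and reals
`λ₁, λ₂ > 0` with `Qv₁ = λ₁v₁`, `Qv₂ = λ₂v₂`, `Q(conj v₁) = −λ₁(conj v₁)`,
`Q(conj v₂) = −λ₂(conj v₂)`, the vectors `v₁, v₂, conj v₁, conj v₂` being nonzero and
pairwise orthogonal for the standard Hermitian inner product `⟨v,w⟩ = Σᵢ conj(vᵢ)·wᵢ`. -/
theorem hermitian_anticonj_eigenbasis (Q : Matrix (Fin 4) (Fin 4) ℂ)
    (hherm : Q.IsHermitian) (hconj : Q.map (starRingEnd ℂ) = -Q) (hdet : Q.det ≠ 0) :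
    ∃ (v₁ v₂ : Fin 4 → ℂ) (l₁ l₂ : ℝ), 0 < l₁ ∧ 0 < l₂ ∧
      Q.mulVec v₁ = (l₁ : ℂ) • v₁ ∧
      Q.mulVec v₂ = (l₂ : ℂ) • v₂ ∧
      Q.mulVec (fun i => conj (v₁ i)) = (-(l₁ : ℂ)) • (fun i => conj (v₁ i)) ∧
      Q.mulVec (fun i => conj (v₂ i)) = (-(l₂ : ℂ)) • (fun i => conj (v₂ i)) ∧
      v₁ ≠ 0 ∧ v₂ ≠ 0 ∧
      (∑ i, conj (v₁ i) * v₂ i) = 0 ∧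
      (∑ i, conj (v₁ i) * conj (v₁ i)) = 0 ∧
      (∑ i, conj (v₁ i) * conj (v₂ i)) = 0 ∧
      (∑ i, conj (v₂ i) * conj (v₁ i)) = 0 ∧
      (∑ i, conj (v₂ i) * conj (v₂ i)) = 0 ∧
      (∑ i, conj (conj (v₁ i)) * conj (v₂ i)) = 0 := by
  have hrank : 2 * 2 ≤ Q.rank := by
    simp [Matrix.rank_of_isUnit Q ((Matrix.isUnit_iff_isUnit_det Q).mpr hdet.isUnit)]
  obtain ⟨v, l, hpos, hne, heig, heig_conj, horth⟩ :=
    hermitian_anticonj_eigenbasis_general hherm hconj hrank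
  exact ⟨v 0, v 1, l 0, l 1, hpos 0, hpos 1, heig 0, heig 1, heig_conj 0, heig_conj 1, hne 0, hne 1,
    horth (i := .inl 0) (j := .inl 1) (by simp), horth Sum.inl_ne_inr, horth Sum.inl_ne_inr,
    horth Sum.inl_ne_inr, horth Sum.inl_ne_inr, horth (i := .inr 0) (j := .inr 1) (by simp)⟩
end
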